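/- Every echelon subgroup of a free group of finite rank n is inert: if H is an echelon subgroup of F_n, then rk(H ∩ G) ≤ rk(G) for every finitely generated subgroup G of F_n. -/

import Mathlib

/-- The rank of a subgroup: the minimal cardinality of a generating set.
For subgroups of free groups (which are free by Nielsen–Schreier) this is the
cardinality of a free basis. -/
noncomputable def rk {G : Type*} [Group G] (H : Subgroup G) : Cardinal :=
  ⨅ S : {S : Set G // Subgroup.closure S = H}, Cardinal.mk S.1

/-- A subgroup `H` is inert if `rk (H ⊓ K) ≤ rk K` for every finitely generated `K`. -/
def IsInert {G : Type*} [Group G] (H : Subgroup G) : Prop :=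
  ∀ K : Subgroup G, K.FG → rk (H ⊓ K) ≤ rk K

/-- `stage x i` is the subgroup generated by the first `i` elements of `x`. -/
def stage {n : ℕ} {F : Type*} [Group F] (x : Fin n → F) (i : ℕ) : Subgroup F :=
  Subgroup.closure (x '' {j | (j : ℕ) < i})

/-- `x` is an ordered free basis of `F`. -/
def IsOrderedBasis {n : ℕ} {F : Type*} [Group F] (x : Fin n → F) : Prop :=
  Function.Bijective (FreeGroup.lift x)

/-- `H` is in echelon form with respect to the ordered basis `x`:
`rk (H ⊓ F_i) ≤ rk (H ⊓ F_{i-1}) + 1` for `i = 1, …, n`. -/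
def InEchelonForm {n : ℕ} {F : Type*} [Group F] (x : Fin n → F) (H : Subgroup F) : Prop :=
  ∀ i : ℕ, i < n → rk (H ⊓ stage x (i + 1)) ≤ rk (H ⊓ stage x i) + 1

/-- `H` is an echelon subgroup: it is in echelon form with respect to
some ordered free basis. -/
def IsEchelon {n : ℕ} (H : Subgroup (FreeGroup (Fin n))) : Prop :=
  ∃ x : Fin n → FreeGroup (Fin n), IsOrderedBasis x ∧ InEchelonForm x H

/-- A 1-generator (subgroup) endomorphism: an endomorphism fixing all but (possibly)
one member of some set of free generators. -/
def IsOneGenEndo {G : Type*} [Group G] (φ : G →* G) : Prop :=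
  ∃ (ι : Type) (b : FreeGroupBasis ι G) (s : Set ι),
    s.Subsingleton ∧ ∀ i ∉ s, φ (b i) = b i

/-- The subgroup of points fixed by an endomorphism. -/
def fixedSubgroup {G : Type*} [Group G] (φ : G →* G) : Subgroup G where
  carrier := {g | φ g = g}
  one_mem' := by simp
  mul_mem' := by intro a b ha hb; simp only [Set.mem_setOf_eq, map_mul] at *; rw [ha, hb]
  inv_mem' := by intro a ha; simp only [Set.mem_setOf_eq, map_inv] at *; rw [ha]

/-- An element is primitive if it belongs to some free basis. -/
def IsPrimitive {n : ℕ} (g : FreeGroup (Fin n)) : Prop :=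
  ∃ x : Fin n → FreeGroup (Fin n), IsOrderedBasis x ∧ ∃ j, x j = g

/-!
A free group has a left-invariant linear order, and hence the edges of its Cayley tree have an
invariant linear order that compares labels first. As in Mineyev's proof of the Hanna Neumann
conjecture, let `V` be an infinite subtree on which `K` acts with finitely many orbits, and call an
edge of `V` *essential* if each of its ends can reach infinitely many vertices of `V` along smaller
edges. Every vertex `v` of `V` has a *threshold*: the edge that must be crossed to get from a finite
set of vertices, reached from `v` along smaller edges, into an infinite one. Sending `v` to its
first edge on the way to the threshold is a `K`-equivariant bijection from the vertices of `V` onto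
the non-essential edges. By the Euler characteristic of the quotient graph, the rank of `K` is
therefore one more than the number of `K`-orbits of essential edges.

Let `V` and `W` be such subtrees for `H` and `G`. An essential edge of `V ∩ W` is essential in both
`V` and `W`. If `H` is in echelon form, then each stage of the filtration adds at most one `H`-orbit
of essential edges of `V`; since labels are compared first, it follows that two essential edges
of `V` with the same label are `H`-translates of each other. An element of `G` that carries one
essential edge of `V ∩ W` to another then lies in `H` as well, because the action on edges is free.
So the `H ⊓ G`-orbits of essential edges of `V ∩ W` inject into the `G`-orbits of those of `W`.
-/

open scoped Pointwise

/-! ### The Cayley tree of a free group -/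

/-- An edge of the Cayley tree of the free group on `ι`; the vertices of the tree are the elements
of `FreeGroup ι`, and the edge with source `v` and label `i` runs from `v` to `v * of i`. -/
@[ext]
structure CayleyEdge (ι : Type*) where
  src : FreeGroup ι
  label : ι

namespace CayleyEdge

variable {ι : Type*}

/-- The target of an edge. -/
def tgt (e : CayleyEdge ι) : FreeGroup ι := e.src * FreeGroup.of e.label

instance : MulAction (FreeGroup ι) (CayleyEdge ι) where
  smul g e := ⟨g * e.src, e.label⟩
  one_smul e := CayleyEdge.ext (one_mul e.src) rfl
  mul_smul g h e := CayleyEdge.ext (mul_assoc g h e.src) rfl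

@[simp]
lemma src_smul (g : FreeGroup ι) (e : CayleyEdge ι) : (g • e).src = g * e.src := rfl

@[simp]
lemma tgt_smul (g : FreeGroup ι) (e : CayleyEdge ι) : (g • e).tgt = g * e.tgt :=
  mul_assoc g e.src _

/-- The edge `e` joins the vertices `u` and `v`, in one of the two directions. -/
def Joins (e : CayleyEdge ι) (u v : FreeGroup ι) : Prop :=
  (e.src = u ∧ e.tgt = v) ∨ (e.src = v ∧ e.tgt = u)

lemma joins_src_tgt (e : CayleyEdge ι) : e.Joins e.src e.tgt := Or.inl ⟨rfl, rfl⟩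

lemma Joins.symm {e : CayleyEdge ι} {u v : FreeGroup ι} (h : e.Joins u v) : e.Joins v u :=
  Or.symm h

lemma Joins.smul {e : CayleyEdge ι} {u v : FreeGroup ι} (h : e.Joins u v) (g : FreeGroup ι) :
    (g • e).Joins (g * u) (g * v) := by
  rcases h with ⟨rfl, rfl⟩ | ⟨rfl, rfl⟩
  · exact Or.inl ⟨rfl, tgt_smul g e⟩
  · exact Or.inr ⟨rfl, tgt_smul g e⟩

@[elab_as_elim]
lemma vertex_induction {P : FreeGroup ι → Prop} (u : FreeGroup ι) (base : P u)
    (step : ∀ (e : CayleyEdge ι) (a b : FreeGroup ι), e.Joins a b → P a → P b)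
    (v : FreeGroup ι) : P v := by
  suffices ∀ w a, P a → P (a * w) by simpa using this (u⁻¹ * v) u base
  intro w
  induction w using FreeGroup.induction_on with
  | C1 => intro a ha; rwa [mul_one]
  | of i => intro a ha; exact step ⟨a, i⟩ _ _ (joins_src_tgt _) ha
  | inv_of i _ =>
    intro a ha
    exact step ⟨a * (FreeGroup.of i)⁻¹, i⟩ _ _ (Or.inr ⟨rfl, inv_mul_cancel_right _ _⟩) ha
  | mul x y hx hy => intro a ha; rw [← mul_assoc]; exact hy _ (hx _ ha)

section Potential

variable {A : Type*} [AddCommGroup A]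

/-- Walking along the edge with label `i` while accumulating the value of the cochain `c`. -/
def stepPerm (c : CayleyEdge ι → A) (i : ι) : Equiv.Perm (FreeGroup ι × A) where
  toFun x := (x.1 * FreeGroup.of i, x.2 + c ⟨x.1, i⟩)
  invFun x := (x.1 * (FreeGroup.of i)⁻¹, x.2 - c ⟨x.1 * (FreeGroup.of i)⁻¹, i⟩)
  left_inv x := by simp
  right_inv x := by simp

/-- A tree has no first cohomology. -/
lemma exists_potential (c : CayleyEdge ι → A) :
    ∃ p : FreeGroup ι → A, ∀ e : CayleyEdge ι, p e.tgt = p e.src + c e := by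
  let walk : FreeGroup ι →* (Equiv.Perm (FreeGroup ι × A))ᵐᵒᵖ :=
    FreeGroup.lift fun i => MulOpposite.op (stepPerm c i)
  let pos : FreeGroup ι → FreeGroup ι × A := fun g => (walk g).unop (1, 0)
  have pos_tgt (e : CayleyEdge ι) : pos e.tgt = stepPerm c e.label (pos e.src) := by
    simp [pos, walk, tgt]
  have pos_fst (g : FreeGroup ι) : (pos g).1 = g := by
    induction g using vertex_induction 1 with
    | base => simp [pos]
    | step e a b h ha =>
      have fst_tgt : (pos e.tgt).1 = (pos e.src).1 * FreeGroup.of e.label := by rw [pos_tgt]; rfl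
      rcases h with ⟨rfl, rfl⟩ | ⟨rfl, rfl⟩
      · rw [fst_tgt, ha, tgt]
      · rw [fst_tgt, tgt] at ha
        exact mul_right_cancel ha
  refine ⟨fun g => (pos g).2, fun e => ?_⟩
  change (pos e.tgt).2 = _
  rw [pos_tgt]
  change (pos e.src).2 + c ⟨(pos e.src).1, e.label⟩ = _
  rw [pos_fst]

lemma eq_of_forall_tgt_eq_src {α : Type*} {p : FreeGroup ι → α}
    (h : ∀ e : CayleyEdge ι, p e.tgt = p e.src) (u v : FreeGroup ι) : p u = p v := by
  induction v using vertex_induction u with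
  | base => rfl
  | step e a b he ha =>
    rcases he with ⟨rfl, rfl⟩ | ⟨rfl, rfl⟩
    · rw [ha, h]
    · rw [ha, h]

end Potential

open Classical in
/-- For each edge `e`, the function `edgeParity · e` is a two-colouring of the vertices that is
constant on each of the two components of the complement of `e`. -/
noncomputable def edgeParity : FreeGroup ι → CayleyEdge ι → ZMod 2 :=
  (exists_potential fun e => Pi.single e 1).choose

open Classical in
lemma edgeParity_tgt (e : CayleyEdge ι) :
    edgeParity e.tgt = edgeParity e.src + Pi.single e 1 :=
  (exists_potential fun e => Pi.single e (1 : ZMod 2)).choose_spec e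

/-- The set of edges of the geodesic from `u` to `v`: those that separate `u` from `v`. -/
def geodesic (u v : FreeGroup ι) : Set (CayleyEdge ι) := {e | edgeParity u e ≠ edgeParity v e}

@[simp]
lemma geodesic_self (u : FreeGroup ι) : geodesic u u = ∅ := by simp [geodesic]

lemma geodesic_comm (u v : FreeGroup ι) : geodesic u v = geodesic v u := by
  simp [geodesic, ne_comm]

lemma symmDiff_geodesic (u v w : FreeGroup ι) :
    symmDiff (geodesic u v) (geodesic v w) = geodesic u w := by
  have ne_xor_ne_iff : ∀ a b c : ZMod 2, (a ≠ b ∧ ¬ b ≠ c ∨ b ≠ c ∧ ¬ a ≠ b) ↔ a ≠ c := by decide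
  ext e
  exact ne_xor_ne_iff _ _ _

lemma geodesic_subset_union (u v w : FreeGroup ι) :
    geodesic u w ⊆ geodesic u v ∪ geodesic v w := by
  rw [← symmDiff_geodesic u v w]
  exact symmDiff_le_sup

lemma Joins.geodesic_eq {e : CayleyEdge ι} {u v : FreeGroup ι} (h : e.Joins u v) :
    geodesic u v = {e} := by
  have src_tgt : geodesic e.src e.tgt = {e} := by
    ext f
    simp [geodesic, edgeParity_tgt, Pi.single_apply]
  rcases h with ⟨rfl, rfl⟩ | ⟨rfl, rfl⟩
  · exact src_tgt
  · rw [geodesic_comm, src_tgt]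

lemma Joins.mem_geodesic_iff {e f : CayleyEdge ι} {u v : FreeGroup ι} (h : f.Joins u v)
    (w : FreeGroup ι) : e ∈ geodesic u w ↔ ¬ (e = f ↔ e ∈ geodesic v w) := by
  rw [← symmDiff_geodesic u v w, h.geodesic_eq, Set.mem_symmDiff, Set.mem_singleton_iff]
  tauto

lemma geodesic_finite (u v : FreeGroup ι) : (geodesic u v).Finite := by
  induction v using vertex_induction u with
  | base => simp
  | step e a b h ha =>
    refine (ha.union (Set.finite_singleton e)).subset ?_
    rw [← h.geodesic_eq]
    exact geodesic_subset_union u a b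

lemma smul_mem_geodesic_iff (g u v : FreeGroup ι) (e : CayleyEdge ι) :
    g • e ∈ geodesic (g * u) (g * v) ↔ e ∈ geodesic u v := by
  have parity_sub_eq := eq_of_forall_tgt_eq_src
    (p := fun w => edgeParity (g * w) (g • e) - edgeParity w e) (fun f => by
      simp only [← tgt_smul, edgeParity_tgt, src_smul]
      by_cases hef : e = f
      · simp [hef]
      · simp [hef, (MulAction.injective g).ne hef]) u v
  change edgeParity (g * u) (g • e) ≠ edgeParity (g * v) (g • e) ↔ edgeParity u e ≠ edgeParity v e
  rw [← sub_ne_zero, ← sub_ne_zero (a := edgeParity u e), sub_eq_sub_iff_sub_eq_sub.1 parity_sub_eq]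

lemma mem_geodesic_mul_iff (g u v : FreeGroup ι) (e : CayleyEdge ι) :
    e ∈ geodesic (g * u) (g * v) ↔ g⁻¹ • e ∈ geodesic u v := by
  rw [← smul_mem_geodesic_iff g u v, smul_inv_smul]

lemma existsUnique_joins_mem_geodesic {u t : FreeGroup ι} (h : t ≠ u) :
    ∃! e, (∃ v, e.Joins u v) ∧ e ∈ geodesic u t := by
  induction t using vertex_induction u with
  | base => exact absurd rfl h
  | step f a b hf ha =>
    by_cases hau : a = u
    · subst hau
      rw [hf.geodesic_eq]
      exact ⟨f, ⟨⟨b, hf⟩, rfl⟩, fun e he => he.2⟩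
    · refine (existsUnique_congr fun e => and_congr_right ?_).1 (ha hau)
      rintro ⟨v, hv⟩
      have hne : e ≠ f := by
        rintro rfl
        rcases hv with ⟨rfl, rfl⟩ | ⟨rfl, rfl⟩ <;> rcases hf with ⟨rfl, rfl⟩ | ⟨rfl, rfl⟩ <;>
          simp_all
      rw [geodesic_comm u, geodesic_comm u, hf.mem_geodesic_iff]
      tauto

lemma Joins.eq_of_mem_geodesic {u v v' t : FreeGroup ι} {e e' : CayleyEdge ι} (h : e.Joins u v)
    (h' : e'.Joins u v') (he : e ∈ geodesic u t) (he' : e' ∈ geodesic u t) : e = e' := by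
  have hne : t ≠ u := by rintro rfl; simp at he
  exact (existsUnique_joins_mem_geodesic hne).unique ⟨⟨v, h⟩, he⟩ ⟨⟨v', h'⟩, he'⟩

lemma Joins.geodesic_eq_sdiff {e : CayleyEdge ι} {u v t : FreeGroup ι} (h : e.Joins u v)
    (he : e ∈ geodesic u t) : geodesic v t = geodesic u t \ {e} := by
  ext f
  rw [h.symm.mem_geodesic_iff, Set.mem_sdiff, Set.mem_singleton_iff]
  by_cases hf : f = e
  · simp [hf, he]
  · simp [hf]

@[elab_as_elim]
lemma geodesic_induction {t : FreeGroup ι} {P : FreeGroup ι → Prop} (base : P t)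
    (step : ∀ (e : CayleyEdge ι) (u v : FreeGroup ι), e.Joins u v → e ∈ geodesic u t →
      geodesic v t = geodesic u t \ {e} → P v → P u) (u : FreeGroup ι) : P u := by
  induction hN : (geodesic u t).ncard using Nat.strong_induction_on generalizing u with
  | _ N ih =>
    by_cases hut : t = u
    · exact hut ▸ base
    · obtain ⟨e, ⟨⟨v, hv⟩, he⟩, -⟩ := existsUnique_joins_mem_geodesic hut
      have hvt := hv.geodesic_eq_sdiff he
      refine step e u v hv he hvt (ih _ ?_ v rfl)
      rw [hvt, ← hN]
      exact Set.ncard_sdiff_singleton_lt_of_mem he (geodesic_finite u t)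

lemma exists_joins_of_mem_geodesic {u t : FreeGroup ι} {e : CayleyEdge ι} (he : e ∈ geodesic u t) :
    ∃ a b, e.Joins a b ∧ geodesic u a ⊆ geodesic u t \ {e} ∧ geodesic b t ⊆ geodesic u t \ {e} := by
  induction u using geodesic_induction (t := t) with
  | base => simp at he
  | step f u v hf hfu hv ih =>
    by_cases hef : e = f
    · subst hef
      exact ⟨u, v, hf, by simp, hv.le⟩
    · obtain ⟨a, b, hab, ha, hb⟩ := ih (hv ▸ ⟨he, hef⟩)
      have hsub : geodesic v t ⊆ geodesic u t := hv ▸ Set.sdiff_subset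
      refine ⟨a, b, hab, ?_, hb.trans (Set.sdiff_subset_sdiff_left hsub)⟩
      have hua : geodesic u a ⊆ {f} ∪ geodesic v a := hf.geodesic_eq ▸ geodesic_subset_union u v a
      refine hua.trans (Set.union_subset ?_ (ha.trans (Set.sdiff_subset_sdiff_left hsub)))
      exact Set.singleton_subset_iff.2 ⟨hfu, Ne.symm hef⟩

end CayleyEdge

/-! ### A left-invariant order on a free group -/

lemma exists_orderIso_extending {α β : Type*} [LinearOrder α] [LinearOrder β] [Countable α]
    [DenselyOrdered α] [NoMinOrder α] [NoMaxOrder α] [Nonempty α] [Countable β] [DenselyOrdered β]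
    [NoMinOrder β] [NoMaxOrder β] [Nonempty β] (p : Order.PartialIso α β) :
    ∃ f : α ≃o β, ∀ x ∈ p.val, f x.1 = x.2 := by
  obtain ⟨_⟩ := nonempty_encodable α
  obtain ⟨_⟩ := nonempty_encodable β
  let cofinals : α ⊕ β → Order.Cofinal (Order.PartialIso α β) :=
    Sum.elim (Order.PartialIso.definedAtLeft β) (Order.PartialIso.definedAtRight α)
  let I := Order.idealOfCofinals p cofinals
  let toFun a := Order.PartialIso.funOfIdeal a I
    (Order.cofinal_meets_idealOfCofinals _ cofinals (Sum.inl a))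
  let invFun b := Order.PartialIso.invOfIdeal b I
    (Order.cofinal_meets_idealOfCofinals _ cofinals (Sum.inr b))
  refine ⟨OrderIso.ofCmpEqCmp (fun a => (toFun a).val) (fun b => (invFun b).val) fun a b => ?_,
    fun x hx => ?_⟩
  · obtain ⟨f, hf, ha⟩ := (toFun a).prop
    obtain ⟨g, hg, hb⟩ := (invFun b).prop
    obtain ⟨m, -, hfm, hgm⟩ := I.directed _ hf _ hg
    exact m.prop (a, _) (hfm ha) (_, b) (hgm hb)
  · obtain ⟨f, hf, ha⟩ := (toFun x.1).prop
    obtain ⟨m, -, hfm, hpm⟩ := I.directed _ hf _ (Order.mem_idealOfCofinals p cofinals)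
    have hcmp := m.prop _ (hfm ha) _ (hpm hx)
    rw [cmp_self_eq_eq] at hcmp
    exact (cmp_eq_eq_iff _ _).1 hcmp.symm

lemma exists_linearOrder_mulLeftStrictMono {G α : Type*} [Group G] [LinearOrder α]
    (h : ∀ g : G, g ≠ 1 → ∃ (φ : G →* (α ≃o α)) (a : α), φ g a ≠ a) :
    ∃ _ : LinearOrder G, MulLeftStrictMono G := by
  classical
  let I := (G →* (α ≃o α)) × α
  let : LinearOrder I := linearOrderOfSTO WellOrderingRel
  have : WellFoundedLT I := ⟨WellOrderingRel.isWellOrder.wf⟩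
  let eval : G → Lex (I → α) := fun g => toLex fun i => i.1 g i.2
  have eval_mul (f g : G) (i : I) : eval (f * g) i = i.1 f (eval g i) := by
    change i.1 (f * g) i.2 = _
    rw [map_mul]
    rfl
  have eval_injective : Function.Injective eval := by
    intro g g' hgg'
    by_contra hne
    obtain ⟨φ, a, ha⟩ := h (g'⁻¹ * g) fun h1 => hne (inv_mul_eq_one.1 h1).symm
    refine ha ?_
    have hφ : φ g a = φ g' a := congrFun (congrArg ofLex hgg') (φ, a)
    rw [map_mul, RelIso.mul_apply, hφ, ← RelIso.mul_apply, ← map_mul, inv_mul_cancel, map_one,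
      RelIso.one_apply]
  refine ⟨LinearOrder.lift' eval eval_injective, ⟨fun f g g' hlt => ?_⟩⟩
  obtain ⟨i, hagree, hi⟩ : eval g < eval g' := hlt
  refine (⟨i, fun j hj => ?_, ?_⟩ : eval (f * g) < eval (f * g'))
  · exact (eval_mul f g j).trans ((congrArg (j.1 f) (hagree j hj)).trans (eval_mul f g' j).symm)
  · exact (eval_mul f g i).trans_lt (((i.1 f).lt_iff_lt.2 hi).trans_eq (eval_mul f g' i).symm)

lemma prod_smul_eq_of_getElem_smul {M α : Type*} [Monoid M] [MulAction M α] (l : List M)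
    (q : ℕ → α) (h : ∀ (j : ℕ) (hj : j < l.length), l[j] • q (j + 1) = q j) :
    l.prod • q l.length = q 0 := by
  induction l generalizing q with
  | nil => simp
  | cons m l ih =>
    have htail : l.prod • q (l.length + 1) = q 1 :=
      ih (fun j => q (j + 1)) fun j hj => h (j + 1) (Nat.succ_lt_succ hj)
    rw [List.prod_cons, List.length_cons, mul_smul, htail]
    exact h 0 (Nat.succ_pos _)

/-- The condition imposed on the action of a generator by its occurrence with sign `b` at position
`j` of a word: the pair `(x, y)` stands for `x ↦ y`, and the letter itself is to send `j + 1`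
to `j`. -/
def shiftPair (j : ℕ) (b : Bool) : ℚ × ℚ :=
  if b then (j + 1, j) else (j, j + 1)

lemma shiftPair_lt_shiftPair {j k : ℕ} {b c : Bool} (hjk : j < k) (h : k = j + 1 → b = c) :
    (shiftPair j b).1 < (shiftPair k c).1 ∧ (shiftPair j b).2 < (shiftPair k c).2 := by
  rcases (Nat.succ_le_of_lt hjk).eq_or_lt with hk | hk
  · obtain rfl := h hk.symm
    subst hk
    cases b <;> simp [shiftPair]
  · have hk' : (j : ℚ) + 1 < k := mod_cast hk
    cases b <;> cases c <;> simp only [shiftPair] <;> constructor <;> simp <;> linarith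

lemma exists_orderIso_shiftPair {ι : Type*} {L : List (ι × Bool)} (hL : FreeGroup.IsReduced L)
    (i : ι) : ∃ f : ℚ ≃o ℚ, ∀ (j : ℕ) (hj : j < L.length), L[j].1 = i →
      f (shiftPair j L[j].2).1 = (shiftPair j L[j].2).2 := by
  classical
  let pairs : Finset (ℚ × ℚ) :=
    ({j : Fin L.length | L[j].1 = i} : Finset _).image fun j : Fin L.length => shiftPair j L[j].2
  have mono (j k : Fin L.length) (hj : L[j].1 = i) (hk : L[k].1 = i) (hjk : j < k) :
      (shiftPair j L[j].2).1 < (shiftPair k L[k].2).1 ∧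
        (shiftPair j L[j].2).2 < (shiftPair k L[k].2).2 := by
    refine shiftPair_lt_shiftPair hjk fun hadj => ?_
    have not_cancel := List.isChain_iff_getElem.1 hL j (hadj ▸ k.2)
    simp only [← hadj] at not_cancel
    exact not_cancel (hj.trans hk.symm)
  have hpairs : ∀ p ∈ pairs, ∀ q ∈ pairs, cmp p.1 q.1 = cmp p.2 q.2 := by
    simp only [pairs, Finset.mem_image, Finset.mem_filter_univ]
    rintro _ ⟨j, hj, rfl⟩ _ ⟨k, hk, rfl⟩
    rcases lt_trichotomy j k with hjk | rfl | hkj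
    · obtain ⟨h1, h2⟩ := mono j k hj hk hjk
      rw [h1.cmp_eq_lt, h2.cmp_eq_lt]
    · simp
    · obtain ⟨h1, h2⟩ := mono k j hk hj hkj
      rw [h1.cmp_eq_gt, h2.cmp_eq_gt]
  obtain ⟨f, hf⟩ := exists_orderIso_extending ⟨pairs, hpairs⟩
  refine ⟨f, fun j hj hi => hf _ (Finset.mem_image.2 ⟨⟨j, hj⟩, ?_, rfl⟩)⟩
  exact (Finset.mem_filter_univ _).2 hi

/-- The generators can be chosen so that the word `w` moves its length, letter by letter, down
to `0`; reducedness makes the finitely many conditions on each generator order preserving. -/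
lemma exists_hom_orderIso_rat_apply_ne {ι : Type*} {w : FreeGroup ι} (hw : w ≠ 1) :
    ∃ (φ : FreeGroup ι →* (ℚ ≃o ℚ)) (q : ℚ), φ w q ≠ q := by
  classical
  choose f hf using exists_orderIso_shiftPair (FreeGroup.isReduced_toWord (x := w))
  let l := w.toWord.map fun x => cond x.2 (f x.1) (f x.1)⁻¹
  have hl : l.length = w.toWord.length := List.length_map _
  have hletter (j : ℕ) (hj : j < l.length) : l[j] • ((j + 1 : ℕ) : ℚ) = (j : ℚ) := by
    have hj' := hf _ j (hl ▸ hj) rfl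
    simp only [l, List.getElem_map, RelIso.smul_def, Nat.cast_succ]
    cases hb : w.toWord[j].2
    · simp only [hb, shiftPair] at hj'
      exact (OrderIso.symm_apply_eq _).2 hj'.symm
    · simpa only [hb, shiftPair, if_true, cond_true] using hj'
  have hlift : FreeGroup.lift f w = l.prod := by
    rw [← FreeGroup.mk_toWord (x := w), FreeGroup.lift_mk]
  refine ⟨FreeGroup.lift f, l.length, ?_⟩
  rw [hlift, ← RelIso.smul_def, prod_smul_eq_of_getElem_smul l (fun j => (j : ℚ)) hletter, hl]
  have hlength : w.toWord.length ≠ 0 := by simpa using hw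
  exact_mod_cast hlength.symm

namespace CayleyEdge

variable {ι : Type*}

lemma exists_linearOrder_smul_lt_smul [LinearOrder ι] :
    ∃ _ : LinearOrder (CayleyEdge ι),
      (∀ (g : FreeGroup ι) (e f : CayleyEdge ι), e < f → g • e < g • f) ∧
        ∀ e f : CayleyEdge ι, e.label < f.label → e < f := by
  obtain ⟨_, _⟩ := exists_linearOrder_mulLeftStrictMono (G := FreeGroup ι) (α := ℚ) fun _ =>
    exists_hom_orderIso_rat_apply_ne
  let key : CayleyEdge ι → ι ×ₗ FreeGroup ι := fun e => toLex (e.label, e.src)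
  have key_injective : Function.Injective key := fun e f h =>
    CayleyEdge.ext (congrArg (fun x => (ofLex x).2) h) (congrArg (fun x => (ofLex x).1) h)
  refine ⟨LinearOrder.lift' key key_injective, fun g e f hef => ?_, fun e f hef => ?_⟩
  · refine Prod.Lex.toLex_lt_toLex.2 ((Prod.Lex.toLex_lt_toLex.1 hef).imp id ?_)
    exact And.imp id fun h => mul_lt_mul_right h g
  · exact Prod.Lex.toLex_lt_toLex.2 (Or.inl hef)

/-- Edges are compared first by label and then by source, in some left-invariant order on the free
group. -/
noncomputable instance [LinearOrder ι] : LinearOrder (CayleyEdge ι) :=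
  exists_linearOrder_smul_lt_smul.choose

variable [LinearOrder ι]

lemma smul_lt_smul_iff (g : FreeGroup ι) {e f : CayleyEdge ι} : g • e < g • f ↔ e < f := by
  have smul_lt_smul := (exists_linearOrder_smul_lt_smul (ι := ι)).choose_spec.1
  refine ⟨fun h => ?_, smul_lt_smul g e f⟩
  simpa only [inv_smul_smul] using smul_lt_smul g⁻¹ _ _ h

lemma lt_of_label_lt {e f : CayleyEdge ι} (h : e.label < f.label) : e < f :=
  exists_linearOrder_smul_lt_smul.choose_spec.2 e f h

lemma label_monotone : Monotone (label : CayleyEdge ι → ι) := fun _ _ h =>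
  not_lt.1 fun h' => (lt_of_label_lt h').not_ge h

end CayleyEdge

/-! ### Cofinite subtrees and clusters -/

namespace CayleyEdge

variable {ι : Type*}

/-- The edges with both ends in `V`. -/
def edgesIn (V : Set (FreeGroup ι)) : Set (CayleyEdge ι) := {e | e.src ∈ V ∧ e.tgt ∈ V}

/-- The edges that lead from `D` to a vertex of `V` outside `D`. -/
def edgeBoundary (V D : Set (FreeGroup ι)) : Set (CayleyEdge ι) :=
  {e | ∃ p q, e.Joins p q ∧ p ∈ D ∧ q ∈ V \ D}

variable {V W D : Set (FreeGroup ι)} {e f m : CayleyEdge ι} {g p q p' q' u v w : FreeGroup ι}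

lemma edgesIn_mono (h : V ⊆ W) : edgesIn V ⊆ edgesIn W := fun _ he => ⟨h he.1, h he.2⟩

lemma Joins.mem_edgesIn_iff (h : e.Joins u v) : e ∈ edgesIn V ↔ u ∈ V ∧ v ∈ V := by
  rcases h with ⟨rfl, rfl⟩ | ⟨rfl, rfl⟩
  · rfl
  · exact And.comm

lemma Joins.src_or_tgt_mem (h : e.Joins u v) (hu : u ∈ D) : e.src ∈ D ∨ e.tgt ∈ D := by
  rcases h with ⟨rfl, rfl⟩ | ⟨rfl, rfl⟩
  · exact Or.inl hu
  · exact Or.inr hu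

lemma Joins.eq_and_eq_or (h : e.Joins u v) (h' : e.Joins p q) :
    (u = p ∧ v = q) ∨ (u = q ∧ v = p) := by
  rcases h with ⟨rfl, rfl⟩ | ⟨rfl, rfl⟩ <;> rcases h' with ⟨rfl, rfl⟩ | ⟨rfl, rfl⟩ <;> simp

lemma finite_setOf_src_or_tgt_mem [Finite ι] (hD : D.Finite) :
    {e : CayleyEdge ι | e.src ∈ D ∨ e.tgt ∈ D}.Finite := by
  have hDι := hD.prod (Set.finite_univ (α := ι))
  have src_mem : {e : CayleyEdge ι | e.src ∈ D}.Finite := by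
    refine (hDι.image fun x => (⟨x.1, x.2⟩ : CayleyEdge ι)).subset fun e he => ?_
    exact ⟨(e.src, e.label), ⟨he, trivial⟩, rfl⟩
  have tgt_mem : {e : CayleyEdge ι | e.tgt ∈ D}.Finite := by
    refine (hDι.image fun x => (⟨x.1 * (FreeGroup.of x.2)⁻¹, x.2⟩ : CayleyEdge ι)).subset
      fun e he => ?_
    exact ⟨(e.tgt, e.label), ⟨he, trivial⟩, CayleyEdge.ext (mul_inv_cancel_right _ _) rfl⟩
  exact src_mem.union tgt_mem

lemma finite_edgeBoundary [Finite ι] (hD : D.Finite) : (edgeBoundary V D).Finite := by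
  refine (finite_setOf_src_or_tgt_mem hD).subset ?_
  rintro f ⟨p, q, hj, hp, -⟩
  exact hj.src_or_tgt_mem hp

/-- A set of vertices that spans a subtree. -/
def IsSubtree (V : Set (FreeGroup ι)) : Prop :=
  ∀ u ∈ V, ∀ v ∈ V, geodesic u v ⊆ edgesIn V

lemma IsSubtree.exists_mem_edgeBoundary (hV : IsSubtree V) (hDV : D ⊆ V) (hw : w ∈ V \ D)
    (hv : v ∈ D) : ∃ f ∈ geodesic v w, f ∈ edgeBoundary V D := by
  induction v using geodesic_induction (t := w) with
  | base => exact absurd hv hw.2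
  | step e v v' hj he hv' ih =>
    have hv'V : v' ∈ V := (hj.mem_edgesIn_iff.1 (hV v (hDV hv) w hw.1 he)).2
    by_cases hD : v' ∈ D
    · obtain ⟨f, hf, hfD⟩ := ih hD
      exact ⟨f, (hv' ▸ hf).1, hfD⟩
    · exact ⟨e, he, v, v', hj, hv, hv'V, hD⟩

/-- `V` spans a nonempty subtree on which the subgroup `K` acts with finitely many orbits. -/
structure IsCofiniteSubtree (K : Subgroup (FreeGroup ι)) (V : Set (FreeGroup ι)) : Prop where
  nonempty : V.Nonempty
  isSubtree : IsSubtree V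
  mul_mem : ∀ k ∈ K, ∀ v ∈ V, k * v ∈ V
  exists_finite : ∃ B : Set (FreeGroup ι), B.Finite ∧ V ⊆ K * B

namespace IsCofiniteSubtree

variable {K : Subgroup (FreeGroup ι)} {k : FreeGroup ι} (h : IsCofiniteSubtree K V) (hk : k ∈ K)
include h hk

lemma mul_mem_iff : k * v ∈ V ↔ v ∈ V := by
  refine ⟨fun hv => ?_, h.mul_mem k hk v⟩
  simpa using h.mul_mem k⁻¹ (K.inv_mem hk) _ hv

lemma smul_mem_edgesIn_iff : k • e ∈ edgesIn V ↔ e ∈ edgesIn V := by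
  rw [edgesIn, Set.mem_ofPred_eq, Set.mem_ofPred_eq, src_smul, tgt_smul, h.mul_mem_iff hk,
    h.mul_mem_iff hk]

end IsCofiniteSubtree

variable [LinearOrder ι]

lemma geodesic_mul_subset_Iio (g : FreeGroup ι) (h : geodesic u w ⊆ Set.Iio e) :
    geodesic (g * u) (g * w) ⊆ Set.Iio (g • e) := by
  intro f hf
  have hlt : g⁻¹ • f < e := h ((mem_geodesic_mul_iff g u w f).1 hf)
  simpa using (smul_lt_smul_iff g).2 hlt

lemma geodesic_subset_Iio_trans (h : geodesic u v ⊆ Set.Iio e) (h' : geodesic v w ⊆ Set.Iio e) :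
    geodesic u w ⊆ Set.Iio e :=
  (geodesic_subset_union u v w).trans (Set.union_subset h h')

lemma Joins.geodesic_subset_Iio (h : f.Joins u v) (hf : f < e) : geodesic u v ⊆ Set.Iio e := by
  rw [h.geodesic_eq]
  exact Set.singleton_subset_iff.2 hf

/-- The vertices of `V` that can be reached from `u` along edges smaller than `e`. -/
def cluster (V : Set (FreeGroup ι)) (e : CayleyEdge ι) (u : FreeGroup ι) : Set (FreeGroup ι) :=
  {w ∈ V | geodesic u w ⊆ Set.Iio e}

/-- The essential edges of `V`: both ends lie in infinite clusters. -/
def essentialEdges (V : Set (FreeGroup ι)) : Set (CayleyEdge ι) :=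
  {e ∈ edgesIn V | (cluster V e e.src).Infinite ∧ (cluster V e e.tgt).Infinite}

lemma essentialEdges_subset_edgesIn (V : Set (FreeGroup ι)) : essentialEdges V ⊆ edgesIn V :=
  Set.sep_subset _ _

lemma essentialEdges_mono (h : V ⊆ W) : essentialEdges V ⊆ essentialEdges W := fun _ he =>
  ⟨edgesIn_mono h he.1, he.2.1.mono fun _ hx => ⟨h hx.1, hx.2⟩,
    he.2.2.mono fun _ hx => ⟨h hx.1, hx.2⟩⟩

lemma Joins.mem_essentialEdges_iff (h : e.Joins u v) :
    e ∈ essentialEdges V ↔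
      e ∈ edgesIn V ∧ (cluster V e u).Infinite ∧ (cluster V e v).Infinite := by
  rcases h with ⟨rfl, rfl⟩ | ⟨rfl, rfl⟩
  · rfl
  · exact and_congr_right fun _ => And.comm

lemma mem_cluster_self (e : CayleyEdge ι) (hu : u ∈ V) : u ∈ cluster V e u := ⟨hu, by simp⟩

lemma cluster_congr (h : geodesic u w ⊆ Set.Iio e) : cluster V e w = cluster V e u := by
  ext x
  refine and_congr_right fun _ => ⟨geodesic_subset_Iio_trans h, geodesic_subset_Iio_trans ?_⟩
  rwa [geodesic_comm]

lemma cluster_mono (h : e ≤ f) : cluster V e u ⊆ cluster V f u := fun _ hx =>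
  ⟨hx.1, hx.2.trans (Set.Iio_subset_Iio h)⟩

lemma infinite_cluster_of_smul_lt (hgV : ∀ v ∈ V, g * v ∈ V) (hp : p ∈ V)
    (hgp : geodesic p (g * p) ⊆ Set.Iio m) (hlt : g • m < m) : (cluster V m p).Infinite := by
  have pow_mem (k : ℕ) : g ^ k * p ∈ cluster V m p := by
    induction k with
    | zero => simpa using mem_cluster_self m hp
    | succ k ih =>
      rw [pow_succ', mul_assoc]
      refine ⟨hgV _ ih.1, geodesic_subset_Iio_trans hgp ?_⟩
      exact (geodesic_mul_subset_Iio g ih.2).trans (Set.Iio_subset_Iio hlt.le)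
  have pow_smul_strictAnti : StrictAnti fun k : ℕ => g ^ k • m := by
    refine strictAnti_nat_of_succ_lt fun k => ?_
    rw [pow_succ, mul_smul]
    exact (smul_lt_smul_iff _).2 hlt
  refine Set.infinite_of_injective_forall_mem (fun i j hij => pow_smul_strictAnti.injective ?_)
    pow_mem
  exact congrArg (· • m) (mul_right_cancel hij)

namespace IsCofiniteSubtree

variable {K : Subgroup (FreeGroup ι)} {k : FreeGroup ι} (h : IsCofiniteSubtree K V) (hk : k ∈ K)
include h hk

lemma mul_mem_cluster_iff : k * w ∈ cluster V (k • e) (k * u) ↔ w ∈ cluster V e u := by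
  refine and_congr (h.mul_mem_iff hk) ⟨fun hw => ?_, geodesic_mul_subset_Iio k⟩
  simpa using geodesic_mul_subset_Iio k⁻¹ hw

lemma finite_cluster_smul_iff : (cluster V (k • e) (k * u)).Finite ↔ (cluster V e u).Finite := by
  have image_cluster : (k * ·) '' cluster V e u = cluster V (k • e) (k * u) := by
    ext x
    obtain ⟨y, rfl⟩ := (Group.mulLeft_bijective k).surjective x
    rw [h.mul_mem_cluster_iff hk, (mul_right_injective k).mem_set_image]
  rw [← image_cluster, Set.finite_image_iff (mul_right_injective k).injOn]

lemma smul_mem_essentialEdges_iff : k • e ∈ essentialEdges V ↔ e ∈ essentialEdges V := by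
  rw [essentialEdges, Set.mem_sep_iff, Set.mem_sep_iff, h.smul_mem_edgesIn_iff hk, src_smul,
    tgt_smul, Set.Infinite, Set.Infinite, h.finite_cluster_smul_iff hk,
    h.finite_cluster_smul_iff hk, Set.Infinite, Set.Infinite]

end IsCofiniteSubtree

/-! ### Outlets and thresholds -/

/-- The cluster of `v` below `m` is finite, and `m` leads out of it, from `p` to `q`. -/
structure IsOutlet (V : Set (FreeGroup ι)) (v p q : FreeGroup ι) (m : CayleyEdge ι) : Prop where
  joins : m.Joins p q
  right_mem : q ∈ V
  left_mem : p ∈ cluster V m v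
  finite : (cluster V m v).Finite

/-- An outlet beyond which the cluster is infinite. Every vertex of an infinite cofinite subtree
has exactly one. -/
structure IsThreshold (V : Set (FreeGroup ι)) (v p q : FreeGroup ι) (m : CayleyEdge ι) : Prop
    extends IsOutlet V v p q m where
  infinite : (cluster V m q).Infinite

lemma IsSubtree.exists_isOutlet [Finite ι] (hV : IsSubtree V) (hVinf : V.Infinite)
    (hD : D.Finite) (hDV : D ⊆ V) (hv : v ∈ D)
    (h : ∀ f ∈ edgeBoundary V D, ∀ u ∈ D, geodesic v u ⊆ Set.Iio f) :
    ∃ p q m, IsOutlet V v p q m ∧ m ∈ edgeBoundary V D := by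
  obtain ⟨w, hw, hwD⟩ := hVinf.exists_notMem_finite hD
  obtain ⟨f, -, hf⟩ := hV.exists_mem_edgeBoundary hDV ⟨hw, hwD⟩ hv
  obtain ⟨m, hm, hmin⟩ := Set.exists_min_image _ id (finite_edgeBoundary hD) ⟨f, hf⟩
  have cluster_eq : cluster V m v = D := by
    refine Set.Subset.antisymm (fun w hw => ?_) fun w hw => ⟨hDV hw, h m hm w hw⟩
    by_contra hwD
    obtain ⟨f, hfw, hf⟩ := hV.exists_mem_edgeBoundary hDV ⟨hw.1, hwD⟩ hv
    exact (hw.2 hfw).not_ge (hmin f hf)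
  obtain ⟨p, q, hj, hp, hq⟩ := hm
  exact ⟨p, q, m, ⟨hj, hq.1, cluster_eq ▸ hp, cluster_eq ▸ hD⟩, p, q, hj, hp, hq⟩

namespace IsOutlet

lemma mem_geodesic (o : IsOutlet V v p q m) : m ∈ geodesic v q := by
  rw [geodesic_comm, o.joins.symm.mem_geodesic_iff, geodesic_comm]
  simpa using fun hm => lt_irrefl m (o.left_mem.2 hm)

lemma le_of_mem_geodesic (o : IsOutlet V v p q m) (he : e ∈ geodesic v q) : e ≤ m := by
  rcases geodesic_subset_union v p q he with h | h
  · exact (o.left_mem.2 h).le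
  · rw [o.joins.geodesic_eq] at h
    exact (Set.mem_singleton_iff.1 h).le

lemma setOf_geodesic_subset_Iic (o : IsOutlet V v p q m) :
    {u ∈ V | geodesic v u ⊆ Set.Iic m} ⊆ cluster V m v ∪ cluster V m q := by
  rintro u ⟨hu, hvu⟩
  by_cases hm : m ∈ geodesic v u
  · refine Or.inr ⟨hu, fun f hf => lt_of_le_of_ne ?_ ?_⟩
    · rcases geodesic_subset_union q v u hf with hqv | hvu'
      · exact o.le_of_mem_geodesic (geodesic_comm q v ▸ hqv)
      · exact hvu hvu'
    · rintro rfl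
      rw [← symmDiff_geodesic q v u, Set.mem_symmDiff, geodesic_comm q v] at hf
      have := o.mem_geodesic
      tauto
  · exact Or.inl ⟨hu, fun f hf => lt_of_le_of_ne (hvu hf) (ne_of_mem_of_not_mem hf hm)⟩

lemma infinite_of_forall_le [Finite ι] (hV : IsSubtree V) (hVinf : V.Infinite) (hv : v ∈ V)
    (hmax : ∀ m' p' q', IsOutlet V v p' q' m' → m' ≤ m) :
    {u ∈ V | geodesic v u ⊆ Set.Iic m}.Infinite := by
  intro hfin
  have lt_of_mem_edgeBoundary :
      ∀ f ∈ edgeBoundary V {u ∈ V | geodesic v u ⊆ Set.Iic m}, m < f := by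
    rintro f ⟨p, q, hj, hp, hqV, hq⟩
    by_contra! hfm
    refine hq ⟨hqV, (geodesic_subset_union v p q).trans (Set.union_subset hp.2 ?_)⟩
    rw [hj.geodesic_eq]
    exact Set.singleton_subset_iff.2 hfm
  have hvD : v ∈ {u ∈ V | geodesic v u ⊆ Set.Iic m} := ⟨hv, by simp⟩
  obtain ⟨p', q', m', o', hm'⟩ := hV.exists_isOutlet hVinf hfin (Set.sep_subset _ _) hvD
    fun f hf u hu g hg => (hu.2 hg).trans_lt (lt_of_mem_edgeBoundary f hf)
  exact (lt_of_mem_edgeBoundary m' hm').not_ge (hmax m' p' q' o')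

end IsOutlet

/-- Otherwise the powers of `g⁻¹` would move `p` around inside the finite cluster of `v`. -/
lemma IsCofiniteSubtree.not_lt_smul_of_isOutlet {K : Subgroup (FreeGroup ι)}
    (h : IsCofiniteSubtree K V) (hg : g ∈ K) (o : IsOutlet V v p q m)
    (o' : IsOutlet V v (g * p) q' (g • m)) : ¬ m < g • m := by
  intro hlt
  have hvp : geodesic p v ⊆ Set.Iio (g • m) :=
    geodesic_comm p v ▸ o.left_mem.2.trans (Set.Iio_subset_Iio hlt.le)
  have hpg : geodesic p (g⁻¹ * p) ⊆ Set.Iio m := by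
    have hp := geodesic_mul_subset_Iio g⁻¹ (geodesic_subset_Iio_trans hvp o'.left_mem.2)
    rwa [inv_mul_cancel_left, inv_smul_smul, geodesic_comm] at hp
  refine infinite_cluster_of_smul_lt (h.mul_mem _ (K.inv_mem hg)) o.left_mem.1 hpg ?_
    (cluster_congr o.left_mem.2 ▸ o.finite)
  simpa using (smul_lt_smul_iff g⁻¹).2 hlt

lemma IsCofiniteSubtree.finite_setOf_isOutlet [Finite ι] {K : Subgroup (FreeGroup ι)}
    (h : IsCofiniteSubtree K V) (v : FreeGroup ι) : {m | ∃ p q, IsOutlet V v p q m}.Finite := by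
  obtain ⟨B, hB, hBV⟩ := h.exists_finite
  let translates (x : CayleyEdge ι × FreeGroup ι) : Set (CayleyEdge ι) :=
    {m | ∃ k ∈ K, k • x.1 = m ∧ ∃ q, IsOutlet V v (k * x.2) q m}
  have translates_not_lt : ∀ x, ∀ m ∈ translates x, ∀ m' ∈ translates x, ¬ m < m' := by
    rintro x _ ⟨k, hk, rfl, q, o⟩ _ ⟨k', hk', rfl, q', o'⟩
    have not_lt := h.not_lt_smul_of_isOutlet (g := k' * k⁻¹) (q' := q')
      (K.mul_mem hk' (K.inv_mem hk)) o
    simp only [mul_assoc, inv_mul_cancel_left, mul_smul, inv_smul_smul] at not_lt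
    exact not_lt o'
  have subsingleton (x) : (translates x).Subsingleton := fun m hm m' hm' =>
    le_antisymm (not_lt.1 (translates_not_lt x m' hm' m hm))
      (not_lt.1 (translates_not_lt x m hm m' hm'))
  refine (((finite_setOf_src_or_tgt_mem hB).prod hB).biUnion fun x _ =>
    (subsingleton x).finite).subset ?_
  rintro m ⟨p, q, o⟩
  obtain ⟨k, hk, b, hb, rfl⟩ := hBV o.left_mem.1
  refine Set.mem_biUnion (x := (k⁻¹ • m, b)) ⟨?_, hb⟩ ⟨k, hk, smul_inv_smul k m, q, o⟩
  exact (o.joins.smul k⁻¹).src_or_tgt_mem ((inv_mul_cancel_left k b).symm ▸ hb)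

lemma IsCofiniteSubtree.exists_isThreshold [Finite ι] {K : Subgroup (FreeGroup ι)}
    (h : IsCofiniteSubtree K V) (hVinf : V.Infinite) (hv : v ∈ V) :
    ∃ p q m, IsThreshold V v p q m := by
  obtain ⟨p₀, q₀, m₀, o₀, -⟩ := h.isSubtree.exists_isOutlet hVinf (Set.finite_singleton v)
    (Set.singleton_subset_iff.2 hv) rfl (by simp)
  obtain ⟨m, ⟨p, q, o⟩, hmax⟩ := Set.exists_max_image _ id (h.finite_setOf_isOutlet v)
    ⟨m₀, p₀, q₀, o₀⟩
  have hinf := IsOutlet.infinite_of_forall_le h.isSubtree hVinf hv fun m' p' q' o' =>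
    hmax m' ⟨p', q', o'⟩
  exact ⟨p, q, m, o, fun hfin =>
    hinf ((o.finite.union hfin).subset o.setOf_geodesic_subset_Iic)⟩

end CayleyEdge

namespace CayleyEdge

variable {ι : Type*} [LinearOrder ι] {K : Subgroup (FreeGroup ι)} {V : Set (FreeGroup ι)}
  {e m m' : CayleyEdge ι} {k p q p' q' u v v' : FreeGroup ι}

namespace IsThreshold

lemma not_lt (t : IsThreshold V v p q m) (t' : IsThreshold V v p' q' m') : ¬ m < m' := by
  intro hlt
  have cluster_eq : cluster V m' q = cluster V m' v :=
    cluster_congr fun f hf => (t.le_of_mem_geodesic hf).trans_lt hlt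
  exact t.infinite (t'.finite.subset (cluster_eq ▸ cluster_mono hlt.le))

lemma unique (t : IsThreshold V v p q m) (t' : IsThreshold V v p' q' m') :
    p = p' ∧ q = q' ∧ m = m' := by
  obtain rfl : m = m' := le_antisymm (_root_.not_lt.1 (t'.not_lt t)) (_root_.not_lt.1 (t.not_lt t'))
  rcases t.joins.eq_and_eq_or t'.joins with ⟨hp, hq⟩ | ⟨-, rfl⟩
  · exact ⟨hp, hq, rfl⟩
  · exact absurd (cluster_congr t'.left_mem.2 ▸ t.finite) t.infinite

lemma congr_vertex (t : IsThreshold V v p q m) (h : geodesic v v' ⊆ Set.Iio m) :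
    IsThreshold V v' p q m where
  __ := t
  left_mem := cluster_congr h ▸ t.left_mem
  finite := cluster_congr h ▸ t.finite

lemma smul (t : IsThreshold V v p q m) (h : IsCofiniteSubtree K V) (hk : k ∈ K) :
    IsThreshold V (k * v) (k * p) (k * q) (k • m) where
  joins := t.joins.smul k
  right_mem := h.mul_mem k hk q t.right_mem
  left_mem := (h.mul_mem_cluster_iff hk).2 t.left_mem
  finite := (h.finite_cluster_smul_iff hk).2 t.finite
  infinite := (h.finite_cluster_smul_iff hk).not.2 t.infinite

end IsThreshold

/-- The edge `e` is the first edge on the way from `v` to its threshold. -/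
def IsExitEdge (V : Set (FreeGroup ι)) (v : FreeGroup ι) (e : CayleyEdge ι) : Prop :=
  ∃ p q m, IsThreshold V v p q m ∧ e ∈ geodesic v q ∧ ∃ w, e.Joins v w

namespace IsExitEdge

lemma smul (t : IsExitEdge V v e) (h : IsCofiniteSubtree K V) (hk : k ∈ K) :
    IsExitEdge V (k * v) (k • e) := by
  obtain ⟨p, q, m, t, he, w, hw⟩ := t
  exact ⟨_, _, _, t.smul h hk, (smul_mem_geodesic_iff k v q e).2 he, _, hw.smul k⟩

lemma edge_unique {e' : CayleyEdge ι} (t : IsExitEdge V v e) (t' : IsExitEdge V v e') :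
    e = e' := by
  obtain ⟨p, q, m, t, he, w, hw⟩ := t
  obtain ⟨p', q', m', t', he', w', hw'⟩ := t'
  obtain ⟨rfl, rfl, rfl⟩ := t.unique t'
  exact hw.eq_of_mem_geodesic hw' he he'

end IsExitEdge

lemma IsThreshold.notMem_geodesic_of_lt (t : IsThreshold V v p q m)
    (t' : IsThreshold V v' p' q' m') (hj : e.Joins v v') (he : e ∈ geodesic v q) (hlt : e < m) :
    e ∉ geodesic v' q' := by
  obtain ⟨rfl, rfl, rfl⟩ := (t.congr_vertex (hj.geodesic_subset_Iio hlt)).unique t'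
  simpa using (hj.mem_geodesic_iff q).1 he

lemma IsThreshold.left_eq_and_right_eq (t : IsThreshold V v p q e) (hj : e.Joins v v') :
    p = v ∧ q = v' := by
  refine (t.joins.eq_and_eq_or hj).resolve_right fun h => lt_irrefl e (t.left_mem.2 ?_)
  rw [h.1, hj.geodesic_eq]
  exact Set.mem_singleton e

lemma IsExitEdge.vertex_unique (t : IsExitEdge V v e) (t' : IsExitEdge V v' e) : v = v' := by
  obtain ⟨p, q, m, t, he, w, hw⟩ := t
  obtain ⟨p', q', m', t', he', w', hw'⟩ := t'
  rcases hw.eq_and_eq_or hw' with ⟨rfl, -⟩ | ⟨-, rfl⟩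
  · rfl
  exfalso
  rcases (t.le_of_mem_geodesic he).lt_or_eq with hlt | rfl
  · exact t.notMem_geodesic_of_lt t' hw he hlt he'
  rcases (t'.le_of_mem_geodesic he').lt_or_eq with hlt | rfl
  · exact t'.notMem_geodesic_of_lt t hw.symm he' hlt he
  obtain ⟨-, rfl⟩ := t.left_eq_and_right_eq hw
  exact t.infinite t'.finite

namespace IsCofiniteSubtree

variable [Finite ι] (h : IsCofiniteSubtree K V) (hVinf : V.Infinite)
include h hVinf

lemma exists_isExitEdge (hv : v ∈ V) : ∃ e ∈ edgesIn V \ essentialEdges V, IsExitEdge V v e := by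
  obtain ⟨p, q, m, t⟩ := h.exists_isThreshold hVinf hv
  have hne : q ≠ v := by
    rintro rfl
    simpa using t.mem_geodesic
  obtain ⟨e, ⟨⟨w, hj⟩, he⟩, -⟩ := existsUnique_joins_mem_geodesic hne
  refine ⟨e, ⟨h.isSubtree v hv q t.right_mem he, fun hess => ?_⟩, p, q, m, t, he, w, hj⟩
  exact (hj.mem_essentialEdges_iff.1 hess).2.1
    (t.finite.subset (cluster_mono (t.le_of_mem_geodesic he)))

lemma exists_isExitEdge_of_finite_cluster (hj : e.Joins u v) (hu : u ∈ V) (hv : v ∈ V)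
    (hfin : (cluster V e u).Finite) : ∃ w ∈ V, IsExitEdge V w e := by
  by_cases hinf : (cluster V e v).Infinite
  · have t : IsThreshold V u u v e := ⟨⟨hj, hv, mem_cluster_self e hu, hfin⟩, hinf⟩
    exact ⟨u, hu, u, v, e, t, t.mem_geodesic, v, hj⟩
  obtain ⟨p, q, m, t⟩ := h.exists_isThreshold hVinf hu
  have hlt : e < m := by
    by_contra! hme
    rcases hme.lt_or_eq with hlt | rfl
    · have cluster_eq : cluster V e q = cluster V e u :=
        cluster_congr fun f hf => (t.le_of_mem_geodesic hf).trans_lt hlt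
      exact t.infinite (hfin.subset (cluster_eq ▸ cluster_mono hme))
    · obtain ⟨-, rfl⟩ := t.left_eq_and_right_eq hj
      exact hinf t.infinite
  have t' : IsThreshold V v p q m := t.congr_vertex (hj.geodesic_subset_Iio hlt)
  by_cases he : e ∈ geodesic u q
  · exact ⟨u, hu, p, q, m, t, he, v, hj⟩
  · refine ⟨v, hv, p, q, m, t', ?_, u, hj.symm⟩
    simpa [hj.mem_geodesic_iff q] using he

lemma exists_vertex_isExitEdge (he : e ∈ edgesIn V \ essentialEdges V) :
    ∃ v ∈ V, IsExitEdge V v e := by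
  by_cases hsrc : (cluster V e e.src).Finite
  · exact h.exists_isExitEdge_of_finite_cluster hVinf e.joins_src_tgt he.1.1 he.1.2 hsrc
  by_cases htgt : (cluster V e e.tgt).Finite
  · exact h.exists_isExitEdge_of_finite_cluster hVinf e.joins_src_tgt.symm he.1.2 he.1.1 htgt
  · exact absurd ⟨he.1, hsrc, htgt⟩ he.2

end IsCofiniteSubtree

end CayleyEdge

/-! ### Counting orbits -/

section OrbitCount

variable {G G' α β : Type*} [Group G] [MulAction G α] [Group G'] [MulAction G' β]
  {K : Subgroup G} {L : Subgroup G'}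

lemma orbit_eq_orbit_iff_exists_smul_eq {a b : α} :
    MulAction.orbit K a = MulAction.orbit K b ↔ ∃ k ∈ K, k • a = b := by
  rw [eq_comm, MulAction.orbit_eq_iff, MulAction.mem_orbit_iff, Subtype.exists]
  simp only [Subgroup.mk_smul, exists_prop]

/-- The number of `K`-orbits that meet `A` (the junk value `0` if there are infinitely many). -/
noncomputable def orbitCount (K : Subgroup G) (A : Set α) : ℕ := (MulAction.orbit K '' A).ncard

lemma orbitCount_le_orbitCount {A : Set α} {B : Set β} (R : α → β → Prop)
    (hB : (MulAction.orbit L '' B).Finite) (exists_rel : ∀ a ∈ A, ∃ b ∈ B, R a b)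
    (orbit_eq : ∀ a ∈ A, ∀ a' ∈ A, ∀ b b', R a b → R a' b' → (∃ g ∈ L, g • b = b') →
      ∃ k ∈ K, k • a = a') : orbitCount K A ≤ orbitCount L B := by
  have : Finite (MulAction.orbit L '' B) := hB
  choose b hbB hRb using exists_rel
  choose a haA orbit_a using fun x : MulAction.orbit K '' A => x.2
  rw [orbitCount, orbitCount, ← Nat.card_coe_set_eq, ← Nat.card_coe_set_eq]
  refine Nat.card_le_card_of_injective
    (fun x => ⟨MulAction.orbit L (b (a x) (haA x)), _, hbB _ _, rfl⟩) fun x y hxy => ?_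
  rw [Subtype.ext_iff, ← orbit_a x, ← orbit_a y, orbit_eq_orbit_iff_exists_smul_eq]
  exact orbit_eq _ (haA x) _ (haA y) _ _ (hRb _ _) (hRb _ _)
    (orbit_eq_orbit_iff_exists_smul_eq.1 (Subtype.ext_iff.1 hxy))

end OrbitCount

namespace CayleyEdge.IsCofiniteSubtree

variable {ι : Type*} {K : Subgroup (FreeGroup ι)} {V : Set (FreeGroup ι)}
  (h : IsCofiniteSubtree K V)
include h

lemma finite_orbit_image : (MulAction.orbit K '' V).Finite := by
  obtain ⟨B, hB, hBV⟩ := h.exists_finite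
  refine (hB.image (MulAction.orbit K)).subset ?_
  rintro _ ⟨v, hv, rfl⟩
  obtain ⟨k, hk, b, hb, rfl⟩ := hBV hv
  exact ⟨b, hb, orbit_eq_orbit_iff_exists_smul_eq.2 ⟨k, hk, rfl⟩⟩

variable [Finite ι]

lemma finite_orbit_image_edgesIn : (MulAction.orbit K '' edgesIn V).Finite := by
  obtain ⟨B, hB, hBV⟩ := h.exists_finite
  refine ((finite_setOf_src_or_tgt_mem hB).image (MulAction.orbit K)).subset ?_
  rintro _ ⟨e, he, rfl⟩
  obtain ⟨k, hk, b, hb, hkb : k * b = e.src⟩ := hBV he.1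
  refine ⟨k⁻¹ • e, Or.inl ?_, orbit_eq_orbit_iff_exists_smul_eq.2 ⟨k, hk, smul_inv_smul k e⟩⟩
  rwa [src_smul, ← hkb, inv_mul_cancel_left]

variable [LinearOrder ι]

lemma finite_orbit_image_essentialEdges : (MulAction.orbit K '' essentialEdges V).Finite :=
  h.finite_orbit_image_edgesIn.subset (Set.image_mono (essentialEdges_subset_edgesIn V))

lemma finite_orbit_image_sdiff :
    (MulAction.orbit K '' (edgesIn V \ essentialEdges V)).Finite :=
  h.finite_orbit_image_edgesIn.subset (Set.image_mono Set.sdiff_subset)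

theorem orbitCount_eq_orbitCount_sdiff (hVinf : V.Infinite) :
    orbitCount K V = orbitCount K (edgesIn V \ essentialEdges V) := by
  refine le_antisymm ?_ ?_
  · refine orbitCount_le_orbitCount (IsExitEdge V) h.finite_orbit_image_sdiff
      (fun v hv => h.exists_isExitEdge hVinf hv) ?_
    rintro v - v' - e _ hv hv' ⟨k, hk, rfl⟩
    exact ⟨k, hk, (hv.smul h hk).vertex_unique hv'⟩
  · refine orbitCount_le_orbitCount (fun e v => IsExitEdge V v e) h.finite_orbit_image
      (fun e he => h.exists_vertex_isExitEdge hVinf he) ?_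
    rintro e - e' - v _ he he' ⟨k, hk, rfl⟩
    exact ⟨k, hk, (he.smul h hk).edge_unique he'⟩

theorem orbitCount_edgesIn (hVinf : V.Infinite) :
    orbitCount K (edgesIn V) = orbitCount K V + orbitCount K (essentialEdges V) := by
  have disjoint : Disjoint (MulAction.orbit K '' (edgesIn V \ essentialEdges V))
      (MulAction.orbit K '' essentialEdges V) := by
    rw [Set.disjoint_left]
    rintro _ ⟨e, he, rfl⟩ ⟨f, hf, hfe⟩
    obtain ⟨k, hk, rfl⟩ := orbit_eq_orbit_iff_exists_smul_eq.1 hfe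
    exact he.2 ((h.smul_mem_essentialEdges_iff hk).2 hf)
  rw [h.orbitCount_eq_orbitCount_sdiff hVinf, orbitCount, orbitCount, orbitCount,
    ← Set.ncard_union_eq disjoint h.finite_orbit_image_sdiff h.finite_orbit_image_essentialEdges,
    ← Set.image_union, Set.sdiff_union_of_subset (essentialEdges_subset_edgesIn V)]

end CayleyEdge.IsCofiniteSubtree

/-! ### The rank formula -/

section Rank

variable {G : Type*} [Group G]

lemma rk_le_mk {K : Subgroup G} {S : Set G} (h : Subgroup.closure S = K) :
    rk K ≤ Cardinal.mk S :=
  ciInf_le' (fun S : {S : Set G // Subgroup.closure S = K} => Cardinal.mk S.1) ⟨S, h⟩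

lemma exists_closure_eq_mk_eq_rk (K : Subgroup G) :
    ∃ S : Set G, Subgroup.closure S = K ∧ Cardinal.mk S = rk K := by
  have : Nonempty {S : Set G // Subgroup.closure S = K} := ⟨⟨K, Subgroup.closure_eq K⟩⟩
  obtain ⟨S, hS⟩ := ciInf_mem fun S : {S : Set G // Subgroup.closure S = K} => Cardinal.mk S.1
  exact ⟨S.1, S.2, hS⟩

lemma rk_bot : rk (⊥ : Subgroup G) = 0 := by
  simpa using rk_le_mk (Subgroup.closure_empty (G := G))

lemma closure_range_freeGroupBasis {X : Type*} (b : FreeGroupBasis X G) :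
    Subgroup.closure (Set.range b) = ⊤ := by
  have range_eq : Set.range b =
      (b.repr.symm : FreeGroup X →* G) '' Set.range (FreeGroup.of : X → FreeGroup X) := by
    rw [← Set.range_comp]
    exact congrArg Set.range (funext fun x => b.repr.eq_symm_apply.2 (b.repr_apply_coe x))
  rw [range_eq, ← MonoidHom.map_closure, FreeGroup.closure_range_of]
  exact Subgroup.map_top_of_surjective _ b.repr.symm.surjective

/-- The homomorphisms to the additive group of the field with two elements. For a free group this
is a vector space of dimension the rank, if that is finite. -/
abbrev ModTwoHom (G : Type*) [Group G] : Type _ := Additive G →+ ZMod 2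

/-- The values of a homomorphism on a family of group elements. -/
def ModTwoHom.eval {X : Type*} (b : X → G) : ModTwoHom G →ₗ[ZMod 2] (X → ZMod 2) where
  toFun f x := f (Additive.ofMul (b x))
  map_add' _ _ := rfl
  map_smul' _ _ := rfl

lemma ModTwoHom.eval_injective {X : Type*} {b : X → G}
    (hb : Subgroup.closure (Set.range b) = ⊤) : Function.Injective (ModTwoHom.eval b) := by
  intro f g hfg
  refine MonoidHom.toAdditiveLeft.symm.injective (MonoidHom.eq_of_eqOn_dense hb ?_)
  rintro _ ⟨x, rfl⟩
  exact congrArg Multiplicative.ofAdd (congrFun hfg x)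

lemma ModTwoHom.eval_surjective {X : Type*} (b : FreeGroupBasis X G) :
    Function.Surjective (ModTwoHom.eval b) := by
  intro c
  let values (x : X) : Multiplicative (ZMod 2) := Multiplicative.ofAdd (c x)
  exact ⟨MonoidHom.toAdditiveLeft (b.lift values), b.lift.symm_apply_apply values⟩

lemma rk_le_rank_modTwoHom (K : Subgroup G) [IsFreeGroup K] :
    rk K ≤ Module.rank (ZMod 2) (ModTwoHom K) := by
  let b := IsFreeGroup.basis K
  have closure_eq : Subgroup.closure (K.subtype '' Set.range b) = K := by
    rw [← MonoidHom.map_closure, closure_range_freeGroupBasis, ← MonoidHom.range_eq_map,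
      Subgroup.range_subtype]
  calc rk K ≤ Cardinal.mk (K.subtype '' Set.range b) := rk_le_mk closure_eq
    _ ≤ Cardinal.mk (IsFreeGroup.Generators K) := Cardinal.mk_image_le.trans Cardinal.mk_range_le
    _ ≤ Module.rank (ZMod 2) (IsFreeGroup.Generators K → ZMod 2) := by
      classical exact (Pi.linearIndependent_single_one _ (ZMod 2)).cardinal_le_rank
    _ ≤ Module.rank (ZMod 2) (ModTwoHom K) :=
      LinearMap.rank_le_of_surjective (ModTwoHom.eval b) (ModTwoHom.eval_surjective b)

lemma rank_modTwoHom_le_rk {K : Subgroup G}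
    (hK : Module.rank (ZMod 2) (ModTwoHom K) < Cardinal.aleph0) :
    Module.rank (ZMod 2) (ModTwoHom K) ≤ rk K := by
  obtain ⟨S, rfl, hS⟩ := exists_closure_eq_mk_eq_rk K
  rw [← hS]
  cases finite_or_infinite S with
  | inr _ => exact hK.le.trans (Cardinal.aleph0_le_mk S)
  | inl _ =>
    have := Fintype.ofFinite S
    let inc (s : S) : Subgroup.closure S := ⟨s, Subgroup.subset_closure s.2⟩
    have closure_range : Subgroup.closure (Set.range inc) = ⊤ := by
      rw [← Subgroup.closure_closure_coe_preimage]
      congr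
      ext ⟨g, hg⟩
      simp [inc]
    calc Module.rank (ZMod 2) (ModTwoHom (Subgroup.closure S))
      _ ≤ Module.rank (ZMod 2) (S → ZMod 2) :=
        LinearMap.rank_le_of_injective _ (ModTwoHom.eval_injective closure_range)
      _ = Cardinal.mk S := by rw [rank_fun', Cardinal.mk_fintype]

end Rank

section InvariantFunctions

variable {G α : Type*} [Group G] [MulAction G α]

/-- The functions on `A` that take the same value on points of `A` in the same `K`-orbit. -/
def invariantFunctions (K : Subgroup G) (A : Set α) : Submodule (ZMod 2) (A → ZMod 2) where
  carrier := {f | ∀ a b : A, ∀ k ∈ K, k • (a : α) = b → f a = f b}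
  add_mem' hf hg a b k hk h := congrArg₂ (· + ·) (hf a b k hk h) (hg a b k hk h)
  zero_mem' _ _ _ _ _ := rfl
  smul_mem' c _ hf a b k hk h := congrArg (c • ·) (hf a b k hk h)

lemma rank_invariantFunctions {K : Subgroup G} {A : Set α}
    (hA : (MulAction.orbit K '' A).Finite) :
    Module.rank (ZMod 2) (invariantFunctions K A) = orbitCount K A := by
  let π : A → MulAction.orbit K '' A := fun a => ⟨MulAction.orbit K a.1, a.1, a.2, rfl⟩
  have hπ : Function.Surjective π := by
    rintro ⟨_, a, ha, rfl⟩
    exact ⟨⟨a, ha⟩, rfl⟩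
  have π_eq_iff (a b : A) : π a = π b ↔ ∃ k ∈ K, k • (a : α) = b :=
    Subtype.ext_iff.trans orbit_eq_orbit_iff_exists_smul_eq
  have range_funLeft :
      LinearMap.range (LinearMap.funLeft (ZMod 2) (ZMod 2) π) = invariantFunctions K A := by
    ext f
    constructor
    · rintro ⟨g, rfl⟩ a b k hk hab
      exact congrArg g ((π_eq_iff a b).2 ⟨k, hk, hab⟩)
    · intro hf
      refine ⟨fun x => f (Function.surjInv hπ x), funext fun a => ?_⟩
      obtain ⟨k, hk, h⟩ := (π_eq_iff _ _).1 (Function.surjInv_eq hπ (π a))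
      exact hf _ _ k hk h
  have := hA.fintype
  rw [← range_funLeft, ← (LinearEquiv.ofInjective _
    (LinearMap.funLeft_injective_of_surjective _ _ π hπ)).rank_eq, rank_fun', orbitCount,
    Set.ncard_eq_toFinset_card', Set.toFinset_card]

end InvariantFunctions

namespace CayleyEdge

variable {ι : Type*} {K : Subgroup (FreeGroup ι)} {V : Set (FreeGroup ι)}

lemma potential_mul_eq {A : Type*} [AddCommGroup A] {c : CayleyEdge ι → A} {p : FreeGroup ι → A}
    (hp : ∀ e : CayleyEdge ι, p e.tgt = p e.src + c e) {g : FreeGroup ι}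
    (hc : ∀ e, c (g • e) = c e) (u : FreeGroup ι) : p (g * u) = p u + (p g - p 1) := by
  have sub_eq := eq_of_forall_tgt_eq_src (p := fun u => p (g * u) - p u) (fun e => by
    rw [← tgt_smul, hp, hp, hc, src_smul, add_sub_add_right_eq_sub]) u 1
  rw [mul_one] at sub_eq
  rw [← sub_eq, add_sub_cancel]

lemma IsSubtree.eq_of_forall_tgt_eq_src {α : Type*} (hV : IsSubtree V) {p : V → α}
    (hp : ∀ e (he : e ∈ edgesIn V), p ⟨e.tgt, he.2⟩ = p ⟨e.src, he.1⟩) (u w : V) : p u = p w := by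
  obtain ⟨u, hu⟩ := u
  induction u using geodesic_induction (t := (w : FreeGroup ι)) with
  | base => rfl
  | step e u v hj he _ ih =>
    have heV := hV u hu w w.2 he
    rcases hj with ⟨rfl, rfl⟩ | ⟨rfl, rfl⟩
    · rw [← hp e heV, ih heV.2]
    · rw [hp e heV, ih heV.1]

/-- The functions on `V` that change by a constant under every element of `K`, together with the
homomorphism that records these constants. -/
def equivariantPotentials (K : Subgroup (FreeGroup ι)) (V : Set (FreeGroup ι)) :
    Submodule (ZMod 2) ((V → ZMod 2) × ModTwoHom K) where
  carrier := {x | ∀ (k : K) (u v : V), (k : FreeGroup ι) * u = v →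
    x.1 v = x.1 u + x.2 (Additive.ofMul k)}
  add_mem' {x y} hx hy k u v h := by
    simp only [Prod.fst_add, Prod.snd_add, Pi.add_apply, AddMonoidHom.add_apply, hx k u v h,
      hy k u v h, add_add_add_comm]
  zero_mem' _ _ _ _ := (add_zero _).symm
  smul_mem' c x hx k u v h := (congrArg (c • ·) (hx k u v h)).trans (smul_add c _ _)

namespace equivariantPotentials

/-- The homomorphism that an equivariant potential comes with. -/
def period : equivariantPotentials K V →ₗ[ZMod 2] ModTwoHom K :=
  LinearMap.snd _ _ _ ∘ₗ (equivariantPotentials K V).subtype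

/-- The differences of a potential along the edges of `V`. -/
def coboundary : equivariantPotentials K V →ₗ[ZMod 2] (edgesIn V → ZMod 2) where
  toFun x e := x.1.1 ⟨e.1.tgt, e.2.2⟩ - x.1.1 ⟨e.1.src, e.2.1⟩
  map_add' _ _ := funext fun _ => add_sub_add_comm _ _ _ _
  map_smul' c _ := funext fun _ => (smul_sub c _ _).symm

lemma range_period : LinearMap.range (period (K := K) (V := V)) = ⊤ := by
  obtain ⟨T, hT, -⟩ := K.exists_isComplement_right 1
  refine LinearMap.range_eq_top.2 fun f => ?_
  refine ⟨⟨(fun v => f (Additive.ofMul (hT.equiv v).1), f), fun k u v huv => ?_⟩, rfl⟩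
  change f (Additive.ofMul (hT.equiv v).1) =
    f (Additive.ofMul (hT.equiv u).1) + f (Additive.ofMul k)
  rw [← huv, hT.equiv_mul_left, ofMul_mul, map_add, add_comm]

lemma rank_ker_period (hV : (MulAction.orbit K '' V).Finite) :
    Module.rank (ZMod 2) (LinearMap.ker (period (K := K) (V := V))) = orbitCount K V := by
  let inc : invariantFunctions K V →ₗ[ZMod 2] equivariantPotentials K V :=
    { toFun p := ⟨(p.1, 0), fun k u v h => (p.2 u v k k.2 h).symm.trans (add_zero _).symm⟩
      map_add' p q := by ext <;> simp
      map_smul' c p := by ext <;> simp }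
  have inc_injective : Function.Injective inc := fun p q h =>
    Subtype.ext (congrArg (fun x : equivariantPotentials K V => x.1.1) h)
  have range_inc : LinearMap.range inc = LinearMap.ker (period (K := K) (V := V)) := by
    ext x
    refine ⟨?_, fun hx => ⟨⟨x.1.1, fun u v k hk h => ?_⟩, Subtype.ext (Prod.ext rfl ?_)⟩⟩
    · rintro ⟨p, rfl⟩
      rfl
    · have period_eq : x.1.2 = 0 := hx
      rw [x.2 ⟨k, hk⟩ u v h, period_eq, AddMonoidHom.zero_apply, add_zero]
    · exact Eq.symm hx
  rw [← range_inc, ← (LinearEquiv.ofInjective inc inc_injective).rank_eq,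
    rank_invariantFunctions hV]

lemma rank_ker_coboundary (h : IsCofiniteSubtree K V) :
    Module.rank (ZMod 2) (LinearMap.ker (coboundary (K := K) (V := V))) = 1 := by
  obtain ⟨v₀, hv₀⟩ := h.nonempty
  let const : ZMod 2 →ₗ[ZMod 2] equivariantPotentials K V :=
    { toFun c := ⟨(fun _ => c, 0), fun _ _ _ _ => (add_zero c).symm⟩
      map_add' c d := by ext <;> simp
      map_smul' c d := by ext <;> simp }
  have const_injective : Function.Injective const := fun c d hcd =>
    congrArg (fun x : equivariantPotentials K V => x.1.1 ⟨v₀, hv₀⟩) hcd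
  have range_const : LinearMap.range const = LinearMap.ker coboundary := by
    ext x
    constructor
    · rintro ⟨c, rfl⟩
      exact funext fun _ => sub_self c
    · intro hx
      have eq_const := h.isSubtree.eq_of_forall_tgt_eq_src fun e he =>
        sub_eq_zero.1 (congrFun (LinearMap.mem_ker.1 hx) ⟨e, he⟩)
      refine ⟨x.1.1 ⟨v₀, hv₀⟩, Subtype.ext (Prod.ext (funext fun v => eq_const _ _) ?_)⟩
      ext k
      have hk := x.2 k ⟨v₀, hv₀⟩ ⟨_, h.mul_mem k k.2 v₀ hv₀⟩ rfl
      rw [eq_const _ ⟨v₀, hv₀⟩] at hk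
      exact (left_eq_add.1 hk).symm
  rw [← range_const]
  simpa using (LinearEquiv.ofInjective const const_injective).lift_rank_eq.symm

lemma coboundary_mem_invariantFunctions (x : equivariantPotentials K V) :
    coboundary x ∈ invariantFunctions K (edgesIn V) := by
  rintro ⟨a, ha⟩ ⟨b, hb⟩ k hk rfl
  have h_tgt := x.2 ⟨k, hk⟩ ⟨a.tgt, ha.2⟩ ⟨(k • a).tgt, hb.2⟩ (tgt_smul k a).symm
  have h_src := x.2 ⟨k, hk⟩ ⟨a.src, ha.1⟩ ⟨(k • a).src, hb.1⟩ (src_smul k a).symm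
  change x.1.1 _ - x.1.1 _ = x.1.1 _ - x.1.1 _
  rw [h_tgt, h_src, add_sub_add_right_eq_sub]

lemma exists_coboundary_eq (h : IsCofiniteSubtree K V) {c : edgesIn V → ZMod 2}
    (hc : c ∈ invariantFunctions K (edgesIn V)) :
    ∃ x : equivariantPotentials K V, coboundary x = c := by
  classical
  let c' (e : CayleyEdge ι) : ZMod 2 := if he : e ∈ edgesIn V then c ⟨e, he⟩ else 0
  have c'_smul : ∀ k ∈ K, ∀ e, c' (k • e) = c' e := by
    intro k hk e
    by_cases he : e ∈ edgesIn V
    · have hke : k • e ∈ edgesIn V := (h.smul_mem_edgesIn_iff hk).2 he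
      simpa only [c', he, hke, dif_pos] using (hc ⟨e, he⟩ ⟨k • e, hke⟩ k hk rfl).symm
    · have hke : k • e ∉ edgesIn V := (h.smul_mem_edgesIn_iff hk).not.2 he
      simp only [c', he, hke, dif_neg, not_false_eq_true]
  obtain ⟨p, hp⟩ := exists_potential c'
  have p_mul (k : K) (u : FreeGroup ι) : p (k * u) = p u + (p k - p 1) :=
    potential_mul_eq hp (c'_smul k k.2) u
  let periods : ModTwoHom K := AddMonoidHom.mk' (fun k => p k.toMul - p 1) fun k l => by
    rw [toMul_add, Subgroup.coe_mul, p_mul]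
    abel
  refine ⟨⟨(fun v => p v, periods), fun k u v huv => ?_⟩, funext fun e => ?_⟩
  · change p v = p u + (p k - p 1)
    rw [← huv, p_mul]
  change p e.1.tgt - p e.1.src = c e
  rw [hp, add_sub_cancel_left]
  exact dif_pos e.2

lemma range_coboundary (h : IsCofiniteSubtree K V) :
    LinearMap.range (coboundary (K := K) (V := V)) = invariantFunctions K (edgesIn V) := by
  refine le_antisymm ?_ fun c hc => exists_coboundary_eq h hc
  rintro _ ⟨x, rfl⟩
  exact coboundary_mem_invariantFunctions x

end equivariantPotentials

namespace IsCofiniteSubtree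

variable [Finite ι] (h : IsCofiniteSubtree K V)
include h

open equivariantPotentials in
/-- The Euler characteristic of the quotient graph, by the rank-nullity theorem for the two maps
out of the equivariant potentials. -/
theorem rk_add_orbitCount :
    rk K + (orbitCount K V : Cardinal) = (orbitCount K (edgesIn V) : Cardinal) + 1 := by
  have hperiod := LinearMap.rank_range_add_rank_ker (period (K := K) (V := V))
  have hcoboundary := LinearMap.rank_range_add_rank_ker (coboundary (K := K) (V := V))
  rw [range_period, rank_top, rank_ker_period h.finite_orbit_image] at hperiod
  rw [range_coboundary h, rank_ker_coboundary h,
    rank_invariantFunctions h.finite_orbit_image_edgesIn, ← hperiod] at hcoboundary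
  have hom_lt_aleph0 : Module.rank (ZMod 2) (ModTwoHom K) < Cardinal.aleph0 := by
    refine (self_le_add_right _ (orbitCount K V : Cardinal)).trans_lt ?_
    rw [← hcoboundary]
    exact_mod_cast Cardinal.natCast_lt_aleph0 (n := orbitCount K (edgesIn V) + 1)
  rw [hcoboundary, (rk_le_rank_modTwoHom K).antisymm (rank_modTwoHom_le_rk hom_lt_aleph0)]

theorem rk_eq_orbitCount_essentialEdges_add_one [LinearOrder ι] (hVinf : V.Infinite) :
    rk K = (orbitCount K (essentialEdges V) + 1 : ℕ) := by
  have euler := h.rk_add_orbitCount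
  rw [h.orbitCount_edgesIn hVinf, Nat.cast_add, add_assoc, add_comm] at euler
  exact_mod_cast Cardinal.eq_of_add_eq_add_left euler Cardinal.natCast_lt_aleph0

end IsCofiniteSubtree

end CayleyEdge

/-! ### Invariant subtrees and their intersections -/

lemma exists_finite_mul_inter_mul_subset {G : Type*} [Group G] (H K : Subgroup G) {B C : Set G}
    (hB : B.Finite) (hC : C.Finite) :
    ∃ D : Set G, D.Finite ∧ (H * B : Set G) ∩ (K * C : Set G) ⊆ (↑(H ⊓ K) : Set G) * D := by
  let common (x : G × G) : Set G := {v | (∃ h ∈ H, h * x.1 = v) ∧ ∃ k ∈ K, k * x.2 = v}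
  have exists_rep : ∀ x, ∃ d, ∀ v ∈ common x, v * d⁻¹ ∈ H ⊓ K := by
    intro x
    rcases (common x).eq_empty_or_nonempty with hx | ⟨d, ⟨h', hh', rfl⟩, k', hk', hd⟩
    · exact ⟨1, by simp [hx]⟩
    · refine ⟨h' * x.1, ?_⟩
      rintro v ⟨⟨h, hh, rfl⟩, k, hk, hv⟩
      refine ⟨?_, ?_⟩
      · simpa [mul_assoc] using H.mul_mem hh (H.inv_mem hh')
      · rw [← hv, ← hd]
        simpa [mul_assoc] using K.mul_mem hk (K.inv_mem hk')
  choose rep hrep using exists_rep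
  refine ⟨rep '' (B ×ˢ C), (hB.prod hC).image rep, ?_⟩
  rintro v ⟨⟨h, hh, b, hb, hv⟩, k, hk, c, hc, hv'⟩
  exact ⟨v * (rep (b, c))⁻¹, hrep (b, c) v ⟨⟨h, hh, hv⟩, k, hk, hv'⟩, rep (b, c),
    ⟨(b, c), ⟨hb, hc⟩, rfl⟩, inv_mul_cancel_right _ _⟩

namespace CayleyEdge

variable {ι : Type*} {G H K : Subgroup (FreeGroup ι)} {B S V W : Set (FreeGroup ι)}
  {e : CayleyEdge ι} {g o u v : FreeGroup ι}

lemma isSubtree_of_forall_geodesic_subset (h : ∀ v ∈ V, geodesic o v ⊆ edgesIn V) :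
    IsSubtree V := fun u hu v hv =>
  (geodesic_subset_union u o v).trans
    (Set.union_subset (geodesic_comm o u ▸ h u hu) (h v hv))

lemma geodesic_mul_subset_edgesIn (hgV : ∀ v ∈ V, g * v ∈ V) (h : geodesic u v ⊆ edgesIn V) :
    geodesic (g * u) (g * v) ⊆ edgesIn V := by
  intro e he
  have he' := h ((mem_geodesic_mul_iff g u v e).1 he)
  exact ⟨by simpa using hgV _ he'.1, by simpa using hgV _ he'.2⟩

lemma geodesic_subset_edgesIn_of_mem_closure
    (hmul : ∀ k ∈ Subgroup.closure S, ∀ v ∈ V, k * v ∈ V)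
    (hS : ∀ s ∈ S, geodesic 1 s ⊆ edgesIn V) (hg : g ∈ Subgroup.closure S) :
    geodesic 1 g ⊆ edgesIn V := by
  induction hg using Subgroup.closure_induction with
  | mem s hs => exact hS s hs
  | one => simp
  | mul a b ha _ iha ihb =>
    have hab := geodesic_mul_subset_edgesIn (hmul a ha) ihb
    rw [mul_one] at hab
    exact (geodesic_subset_union 1 a (a * b)).trans (Set.union_subset iha hab)
  | inv a ha ih =>
    have ha' := geodesic_mul_subset_edgesIn (hmul a⁻¹ (Subgroup.inv_mem _ ha)) ih
    rwa [mul_one, inv_mul_cancel, geodesic_comm] at ha'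

lemma IsSubtree.insert_of_joins (hB : IsSubtree B) (hj : e.Joins u v) (hu : u ∈ B) :
    IsSubtree (insert v B) := by
  have edgesIn_subset := edgesIn_mono (Set.subset_insert v B)
  refine isSubtree_of_forall_geodesic_subset (o := u) ?_
  rintro w (rfl | hw)
  · rw [hj.geodesic_eq, Set.singleton_subset_iff, hj.mem_edgesIn_iff]
    exact ⟨Set.mem_insert_of_mem _ hu, Set.mem_insert _ _⟩
  · exact (hB u hu w hw).trans edgesIn_subset

lemma IsSubtree.exists_finite_superset (hB : IsSubtree B) (hfin : B.Finite) (hu : u ∈ B)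
    (w : FreeGroup ι) : ∃ C, C.Finite ∧ IsSubtree C ∧ B ⊆ C ∧ w ∈ C := by
  induction w using vertex_induction (u := u) with
  | base => exact ⟨B, hfin, hB, subset_rfl, hu⟩
  | step e a b hj ih =>
    obtain ⟨C, hCfin, hC, hBC, ha⟩ := ih
    exact ⟨insert b C, hCfin.insert b, hC.insert_of_joins hj ha, hBC.trans (Set.subset_insert b C),
      Set.mem_insert b C⟩

lemma exists_finite_isSubtree_superset (hS : S.Finite) :
    ∃ B, B.Finite ∧ IsSubtree B ∧ 1 ∈ B ∧ S ⊆ B := by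
  induction S, hS using Set.Finite.induction_on with
  | empty =>
    refine ⟨{1}, Set.finite_singleton 1, isSubtree_of_forall_geodesic_subset (o := 1) ?_, rfl,
      Set.empty_subset _⟩
    rintro _ rfl
    simp
  | @insert s S _ _ ih =>
    obtain ⟨B, hBfin, hB, hB1, hSB⟩ := ih
    obtain ⟨C, hCfin, hC, hBC, hs⟩ := hB.exists_finite_superset hBfin hB1 s
    exact ⟨C, hCfin, hC, hBC hB1, Set.insert_subset hs (hSB.trans hBC)⟩

theorem exists_isCofiniteSubtree (hG : G.FG) : ∃ V, IsCofiniteSubtree G V ∧ 1 ∈ V := by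
  obtain ⟨S, rfl, hS⟩ := (Subgroup.fg_iff G).1 hG
  obtain ⟨B, hBfin, hB, hB1, hSB⟩ := exists_finite_isSubtree_superset hS
  let V : Set (FreeGroup ι) := Subgroup.closure S * B
  have hBV : B ⊆ V := fun b hb => ⟨1, Subgroup.one_mem _, b, hb, one_mul b⟩
  have hmul : ∀ k ∈ Subgroup.closure S, ∀ v ∈ V, k * v ∈ V := by
    rintro k hk _ ⟨g, hg, b, hb, rfl⟩
    exact ⟨k * g, Subgroup.mul_mem _ hk hg, b, hb, mul_assoc k g b⟩
  have geodesic_of_mem : ∀ b ∈ B, geodesic 1 b ⊆ edgesIn V := fun b hb =>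
    (hB 1 hB1 b hb).trans (edgesIn_mono hBV)
  refine ⟨V, ⟨⟨1, hBV hB1⟩, isSubtree_of_forall_geodesic_subset (o := 1) ?_, hmul, B, hBfin,
    subset_rfl⟩, hBV hB1⟩
  rintro _ ⟨g, hg, b, hb, rfl⟩
  have geodesic_to_g := geodesic_subset_edgesIn_of_mem_closure hmul
    (fun s hs => geodesic_of_mem s (hSB hs)) hg
  have geodesic_from_g := geodesic_mul_subset_edgesIn (hmul g hg) (geodesic_of_mem b hb)
  rw [mul_one] at geodesic_from_g
  exact (geodesic_subset_union 1 g (g * b)).trans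
    (Set.union_subset geodesic_to_g geodesic_from_g)

namespace IsCofiniteSubtree

lemma inter (hV : IsCofiniteSubtree H V) (hW : IsCofiniteSubtree G W)
    (hne : (V ∩ W).Nonempty) : IsCofiniteSubtree (H ⊓ G) (V ∩ W) where
  nonempty := hne
  isSubtree u hu v hv e he :=
    have heV := hV.isSubtree u hu.1 v hv.1 he
    have heW := hW.isSubtree u hu.2 v hv.2 he
    ⟨⟨heV.1, heW.1⟩, heV.2, heW.2⟩
  mul_mem k hk v hv := ⟨hV.mul_mem k hk.1 v hv.1, hW.mul_mem k hk.2 v hv.2⟩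
  exists_finite := by
    obtain ⟨B, hB, hBV⟩ := hV.exists_finite
    obtain ⟨C, hC, hCW⟩ := hW.exists_finite
    obtain ⟨D, hD, hsub⟩ := exists_finite_mul_inter_mul_subset H G hB hC
    exact ⟨D, hD, (Set.inter_subset_inter hBV hCW).trans hsub⟩

lemma infinite (h : IsCofiniteSubtree K V) (hK : K ≠ ⊥) : V.Infinite := by
  obtain ⟨k, hk, hk1⟩ := K.bot_or_exists_ne_one.resolve_left hK
  obtain ⟨v, hv⟩ := h.nonempty
  refine Set.infinite_of_injective_forall_mem (f := fun i : ℕ => k ^ i * v) ?_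
    fun i => h.mul_mem _ (K.pow_mem hk i) v hv
  exact (mul_left_injective v).comp (IsMulTorsionFree.pow_right_injective hk1)

end IsCofiniteSubtree

variable [LinearOrder ι] [Finite ι]

theorem rk_inf_le_of_isCofiniteSubtree (hV : IsCofiniteSubtree H V) (hW : IsCofiniteSubtree G W)
    (hne : (V ∩ W).Nonempty)
    (exists_smul_eq : ∀ e ∈ essentialEdges V, ∀ e' ∈ essentialEdges V, e.label = e'.label →
      ∃ h ∈ H, h • e = e') :
    rk (H ⊓ G) ≤ rk G := by
  by_cases hbot : H ⊓ G = ⊥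
  · rw [hbot, rk_bot]
    exact zero_le
  have hVW := hV.inter hW hne
  have hinf := hVW.infinite hbot
  rw [hVW.rk_eq_orbitCount_essentialEdges_add_one hinf,
    hW.rk_eq_orbitCount_essentialEdges_add_one (hinf.mono Set.inter_subset_right)]
  have orbitCount_le : orbitCount (H ⊓ G) (essentialEdges (V ∩ W)) ≤
      orbitCount G (essentialEdges W) := by
    refine orbitCount_le_orbitCount Eq hW.finite_orbit_image_essentialEdges
      (fun e he => ⟨e, essentialEdges_mono Set.inter_subset_right he, rfl⟩) ?_
    rintro e he _ he' _ _ rfl rfl ⟨g, hg, rfl⟩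
    obtain ⟨h, hh, hhe⟩ := exists_smul_eq e (essentialEdges_mono Set.inter_subset_left he) (g • e)
      (essentialEdges_mono Set.inter_subset_left he') rfl
    obtain rfl : h = g := mul_right_cancel (congrArg src hhe)
    exact ⟨h, ⟨hh, hg⟩, rfl⟩
  exact_mod_cast Nat.add_le_add_right orbitCount_le 1

end CayleyEdge

/-! ### Free factors and the echelon filtration -/

/-- The free factor generated by the basis elements with index in `S`. -/
def freeFactor {ι : Type*} (S : Set ι) : Subgroup (FreeGroup ι) :=
  Subgroup.closure (FreeGroup.of '' S)

section freeFactor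

variable {ι : Type*} {S T : Set ι}

lemma of_mem_freeFactor_iff {i : ι} : FreeGroup.of i ∈ freeFactor S ↔ i ∈ S := by
  classical
  refine ⟨fun hi => ?_, fun hi => Subgroup.subset_closure ⟨i, hi, rfl⟩⟩
  let killS : FreeGroup ι →* FreeGroup ι :=
    FreeGroup.lift fun j => if j ∈ S then 1 else FreeGroup.of j
  have le_ker : freeFactor S ≤ killS.ker := by
    refine (Subgroup.closure_le _).2 ?_
    rintro _ ⟨j, hj, rfl⟩
    simp [killS, MonoidHom.mem_ker, hj]
  by_contra hiS
  have hker : killS (FreeGroup.of i) = 1 := le_ker hi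
  rw [FreeGroup.lift_apply_of, if_neg hiS] at hker
  exact FreeGroup.of_ne_one i hker

lemma freeFactor_mono (h : S ⊆ T) : freeFactor S ≤ freeFactor T :=
  Subgroup.closure_mono (Set.image_mono h)

lemma freeFactor_empty : freeFactor (∅ : Set ι) = ⊥ := by simp [freeFactor]

lemma freeFactor_univ : freeFactor (Set.univ : Set ι) = ⊤ := by
  rw [freeFactor, Set.image_univ, FreeGroup.closure_range_of]

end freeFactor

namespace CayleyEdge

variable {ι : Type*} {H K L : Subgroup (FreeGroup ι)} {S T : Set ι} {V W : Set (FreeGroup ι)}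
  {e e' : CayleyEdge ι} {u v : FreeGroup ι}

lemma label_mem_of_mem_edgesIn_freeFactor (he : e ∈ edgesIn (freeFactor S : Set (FreeGroup ι))) :
    e.label ∈ S :=
  of_mem_freeFactor_iff.1 (((freeFactor S).mul_mem_cancel_left he.1).1 he.2)

lemma Joins.mem_freeFactor_iff (h : e.Joins u v) (he : e.label ∈ S) :
    u ∈ freeFactor S ↔ v ∈ freeFactor S := by
  have tgt_mem_iff : e.tgt ∈ freeFactor S ↔ e.src ∈ freeFactor S :=
    (freeFactor S).mul_mem_cancel_right (of_mem_freeFactor_iff.2 he)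
  rcases h with ⟨rfl, rfl⟩ | ⟨rfl, rfl⟩
  · exact tgt_mem_iff.symm
  · exact tgt_mem_iff

lemma mem_freeFactor_of_forall_label_mem (hu : u ∈ freeFactor S)
    (h : ∀ e ∈ geodesic u v, e.label ∈ S) : v ∈ freeFactor S := by
  induction u using geodesic_induction (t := v) with
  | base => exact hu
  | step e u w hj he hw ih =>
    exact ih ((hj.mem_freeFactor_iff (h e he)).1 hu) fun f hf => h f (hw ▸ hf).1

lemma isCofiniteSubtree_freeFactor (S : Set ι) :
    IsCofiniteSubtree (freeFactor S) (freeFactor S : Set (FreeGroup ι)) where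
  nonempty := ⟨1, one_mem _⟩
  isSubtree := by
    refine isSubtree_of_forall_geodesic_subset (o := 1) fun g hg =>
      geodesic_subset_edgesIn_of_mem_closure (fun k hk v hv => mul_mem hk hv) ?_ hg
    rintro _ ⟨i, hi, rfl⟩
    have hj : (⟨1, i⟩ : CayleyEdge ι).Joins 1 (FreeGroup.of i) := Or.inl ⟨rfl, one_mul _⟩
    rw [hj.geodesic_eq, Set.singleton_subset_iff, hj.mem_edgesIn_iff]
    exact ⟨one_mem _, of_mem_freeFactor_iff.2 hi⟩
  mul_mem _ hk _ hv := mul_mem hk hv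
  exists_finite := ⟨{1}, Set.finite_singleton 1, by simp⟩

lemma IsCofiniteSubtree.inter_freeFactor (hV : IsCofiniteSubtree H V) (hV1 : 1 ∈ V) (S : Set ι) :
    IsCofiniteSubtree (H ⊓ freeFactor S) (V ∩ freeFactor S) :=
  hV.inter (isCofiniteSubtree_freeFactor S) ⟨1, hV1, one_mem _⟩

variable [LinearOrder ι]

lemma mem_essentialEdges_inter_freeFactor (he : e ∈ essentialEdges V)
    (hsrc : e.src ∈ freeFactor S) (hS : Set.Iic e.label ⊆ S) :
    e ∈ essentialEdges (V ∩ freeFactor S) := by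
  have htgt : e.tgt ∈ freeFactor S :=
    ((joins_src_tgt e).mem_freeFactor_iff (hS le_rfl)).1 hsrc
  have cluster_subset : ∀ u ∈ freeFactor S, cluster V e u ⊆ cluster (V ∩ freeFactor S) e u :=
    fun u hu w hw => ⟨⟨hw.1, mem_freeFactor_of_forall_label_mem hu fun f hf =>
      hS (label_monotone (hw.2 hf).le)⟩, hw.2⟩
  exact ⟨⟨⟨he.1.1, hsrc⟩, he.1.2, htgt⟩, he.2.1.mono (cluster_subset _ hsrc),
    he.2.2.mono (cluster_subset _ htgt)⟩

/-- The witness is the largest edge on the way from `1` to `e`. -/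
lemma exists_mem_essentialEdges_label_notMem (hV : IsSubtree V) (hV1 : 1 ∈ V)
    (hS : IsLowerSet S) (hinf : (V ∩ freeFactor S).Infinite) (he : e ∈ essentialEdges V)
    (hlabel : e.label ∈ S) (hsrc : e.src ∉ freeFactor S) :
    ∃ m ∈ essentialEdges V, m.label ∉ S := by
  obtain ⟨f, hf, hfS⟩ : ∃ f ∈ geodesic 1 e.src, f.label ∉ S := by
    by_contra! hall
    exact hsrc (mem_freeFactor_of_forall_label_mem (one_mem _) hall)
  obtain ⟨m, hm, hmax⟩ := Set.exists_max_image _ id (geodesic_finite 1 e.src) ⟨f, hf⟩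
  have hmS : m.label ∉ S := fun hmS => hfS (hS (label_monotone (hmax f hf)) hmS)
  have lt_of_label_mem {f : CayleyEdge ι} (hfS : f.label ∈ S) : f < m :=
    lt_of_label_lt (lt_of_not_ge fun hle => hmS (hS hle hfS))
  have sdiff_subset_Iio : geodesic 1 e.src \ {m} ⊆ Set.Iio m := fun f hf =>
    lt_of_le_of_ne (hmax f hf.1) hf.2
  obtain ⟨a, b, hj, ha, hb⟩ := exists_joins_of_mem_geodesic hm
  refine ⟨m, hj.mem_essentialEdges_iff.2 ⟨hV 1 hV1 _ he.1.1 hm, ?_, ?_⟩, hmS⟩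
  · rw [cluster_congr (ha.trans sdiff_subset_Iio)]
    refine hinf.mono fun w hw => ⟨hw.1, fun f hf => lt_of_label_mem ?_⟩
    exact label_mem_of_mem_edgesIn_freeFactor
      ((isCofiniteSubtree_freeFactor S).isSubtree 1 (one_mem _) w hw.2 hf)
  · rw [← cluster_congr (hb.trans sdiff_subset_Iio)]
    exact he.2.1.mono (cluster_mono (lt_of_label_mem hlabel).le)

lemma smul_ne_of_label_notMem (he : e ∈ essentialEdges (V ∩ freeFactor S)) (he' : e'.label ∉ S)
    (g : FreeGroup ι) : g • e ≠ e' := by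
  rintro rfl
  have heS := label_mem_of_mem_edgesIn_freeFactor (edgesIn_mono Set.inter_subset_right he.1)
  exact he' heS

variable [Finite ι]

lemma IsCofiniteSubtree.one_lt_rk (hV : IsCofiniteSubtree K V) (he : e ∈ essentialEdges V) :
    1 < rk K := by
  have hVinf : V.Infinite := he.2.1.mono (Set.sep_subset _ _)
  have hpos : 0 < orbitCount K (essentialEdges V) :=
    (Set.ncard_pos hV.finite_orbit_image_essentialEdges).2 ⟨_, e, he, rfl⟩
  rw [hV.rk_eq_orbitCount_essentialEdges_add_one hVinf]
  exact_mod_cast Nat.succ_lt_succ hpos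

lemma IsCofiniteSubtree.exists_smul_eq_of_rk_le_rk_add_one (hV : IsCofiniteSubtree K V)
    (hVinf : V.Infinite) (hW : IsCofiniteSubtree L W) (hVW : V ⊆ W) (hrk : rk L ≤ rk K + 1)
    (mem_of_smul_mem : ∀ f ∈ essentialEdges V, ∀ g ∈ L, g • f ∈ essentialEdges V → g ∈ K)
    (he : e ∈ essentialEdges W) (hnew : ∀ f ∈ essentialEdges V, ∀ g ∈ L, g • f ≠ e)
    (he' : e' ∈ essentialEdges W) (hnew' : ∀ f ∈ essentialEdges V, ∀ g ∈ L, g • f ≠ e') :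
    ∃ g ∈ L, g • e = e' := by
  let oldOrbits := MulAction.orbit L '' essentialEdges V
  let orbits := MulAction.orbit L '' essentialEdges W
  have hsub : oldOrbits ⊆ orbits := Set.image_mono (essentialEdges_mono hVW)
  have hfin : orbits.Finite := hW.finite_orbit_image_essentialEdges
  have mem_sdiff {d} (hd : d ∈ essentialEdges W)
      (hnew : ∀ f ∈ essentialEdges V, ∀ g ∈ L, g • f ≠ d) :
      MulAction.orbit L d ∈ orbits \ oldOrbits := by
    refine ⟨⟨d, hd, rfl⟩, ?_⟩
    rintro ⟨f, hf, hfd⟩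
    obtain ⟨g, hg, hgf⟩ := orbit_eq_orbit_iff_exists_smul_eq.1 hfd
    exact hnew f hf g hg hgf
  have ncard_sdiff_le_one : (orbits \ oldOrbits).ncard ≤ 1 := by
    have le_old : orbitCount K (essentialEdges V) ≤ oldOrbits.ncard := by
      refine orbitCount_le_orbitCount Eq (hfin.subset hsub) (fun f hf => ⟨f, hf, rfl⟩) ?_
      rintro f hf _ hf' _ _ rfl rfl ⟨g, hg, rfl⟩
      exact ⟨g, mem_of_smul_mem f hf g hg hf', rfl⟩
    have le_add_one : orbits.ncard ≤ orbitCount K (essentialEdges V) + 1 := by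
      rw [hV.rk_eq_orbitCount_essentialEdges_add_one hVinf,
        hW.rk_eq_orbitCount_essentialEdges_add_one (hVinf.mono hVW)] at hrk
      exact Nat.le_of_add_le_add_right (by exact_mod_cast hrk)
    have := Set.ncard_sdiff_add_ncard_of_subset hsub hfin
    omega
  exact orbit_eq_orbit_iff_exists_smul_eq.1 <|
    (Set.ncard_le_one hfin.sdiff).1 ncard_sdiff_le_one _ (mem_sdiff he hnew) _
      (mem_sdiff he' hnew')

namespace IsCofiniteSubtree

variable (hV : IsCofiniteSubtree H V) (hV1 : 1 ∈ V)
include hV hV1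

variable (hST : S ⊆ T) (hrk : rk (H ⊓ freeFactor T) ≤ rk (H ⊓ freeFactor S) + 1)
include hrk

lemma infinite_inter_freeFactor (he : e ∈ essentialEdges (V ∩ freeFactor T)) :
    (V ∩ freeFactor S).Infinite := by
  refine (hV.inter_freeFactor hV1 S).infinite fun hbot => ?_
  rw [hbot, rk_bot, zero_add] at hrk
  exact ((hV.inter_freeFactor hV1 T).one_lt_rk he).not_ge hrk

include hST

lemma exists_smul_eq_of_forall_smul_ne
    (he : e ∈ essentialEdges (V ∩ freeFactor T))
    (hnew : ∀ f ∈ essentialEdges (V ∩ freeFactor S), ∀ g ∈ H, g • f ≠ e)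
    (he' : e' ∈ essentialEdges (V ∩ freeFactor T))
    (hnew' : ∀ f ∈ essentialEdges (V ∩ freeFactor S), ∀ g ∈ H, g • f ≠ e') :
    ∃ g ∈ H, g • e = e' := by
  obtain ⟨g, hg, hge⟩ := exists_smul_eq_of_rk_le_rk_add_one (hV.inter_freeFactor hV1 S)
    (hV.infinite_inter_freeFactor hV1 hrk he) (hV.inter_freeFactor hV1 T)
    (Set.inter_subset_inter_right V (freeFactor_mono hST)) hrk
    (fun f hf g hg hgf => ⟨hg.1, ((freeFactor S).mul_mem_cancel_right hf.1.1.2).1 hgf.1.1.2⟩)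
    he (fun f hf g hg => hnew f hf g hg.1) he' (fun f hf g hg => hnew' f hf g hg.1)
  exact ⟨g, hg.1, hge⟩

lemma exists_smul_mem_essentialEdges_inter_freeFactor (hS : IsLowerSet S)
    (he : e ∈ essentialEdges (V ∩ freeFactor T)) (hlabel : e.label ∈ S) :
    ∃ h ∈ H, h • e ∈ essentialEdges (V ∩ freeFactor S) := by
  have hVT := hV.inter_freeFactor hV1 T
  have inter_subset : V ∩ freeFactor T ∩ freeFactor S ⊆ V ∩ freeFactor S :=
    Set.inter_subset_inter_left _ Set.inter_subset_left
  have subset_inter : V ∩ freeFactor S ⊆ V ∩ freeFactor T ∩ freeFactor S := fun v hv =>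
    ⟨⟨hv.1, freeFactor_mono hST hv.2⟩, hv.2⟩
  by_contra! hall
  have hsrc : e.src ∉ freeFactor S := fun hsrc => by
    refine hall 1 H.one_mem (essentialEdges_mono inter_subset ?_)
    rw [one_smul]
    exact mem_essentialEdges_inter_freeFactor he hsrc fun i hi => hS hi hlabel
  obtain ⟨m, hm, hmS⟩ := exists_mem_essentialEdges_label_notMem hVT.isSubtree
    ⟨hV1, one_mem _⟩ hS ((hV.infinite_inter_freeFactor hV1 hrk he).mono subset_inter) he hlabel hsrc
  obtain ⟨g, -, rfl⟩ := hV.exists_smul_eq_of_forall_smul_ne hV1 hST hrk he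
    (fun f hf g hg hgf => hall g⁻¹ (H.inv_mem hg) (by rwa [← hgf, inv_smul_smul])) hm
    fun f hf g _ => smul_ne_of_label_notMem hf hmS g
  exact hmS hlabel

end IsCofiniteSubtree

end CayleyEdge

section Stage

open CayleyEdge

variable {n : ℕ} {H : Subgroup (FreeGroup (Fin n))} {V : Set (FreeGroup (Fin n))}

lemma stage_of_eq_freeFactor (i : ℕ) :
    stage (FreeGroup.of : Fin n → _) i = freeFactor {j : Fin n | (j : ℕ) < i} := rfl

lemma setOf_val_lt_subset_succ (n i : ℕ) :
    {j : Fin n | (j : ℕ) < i} ⊆ {j : Fin n | (j : ℕ) < i + 1} := fun _ hj => Nat.lt_succ_of_lt hj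

lemma stage_of_zero : stage (FreeGroup.of : Fin n → _) 0 = ⊥ := by
  simp [stage_of_eq_freeFactor, freeFactor_empty]

lemma stage_of_self : stage (FreeGroup.of : Fin n → _) n = ⊤ := by
  simp [stage_of_eq_freeFactor, freeFactor_univ]

namespace InEchelonForm

variable (hH : InEchelonForm FreeGroup.of H)
include hH

lemma fg : H.FG := by
  have rk_le (i : ℕ) (hi : i ≤ n) : rk (H ⊓ stage FreeGroup.of i) ≤ i := by
    induction i with
    | zero => simp [stage_of_zero, rk_bot]
    | succ i ih =>
      rw [Nat.cast_succ]
      exact (hH i hi).trans (add_le_add_left (ih (Nat.le_of_succ_le hi)) 1)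
  obtain ⟨S, hS, hrk⟩ := exists_closure_eq_mk_eq_rk H
  refine (Subgroup.fg_iff H).2 ⟨S, hS, Cardinal.lt_aleph0_iff_set_finite.1 ?_⟩
  have rk_le_n := rk_le n le_rfl
  rw [stage_of_self, inf_top_eq] at rk_le_n
  exact (hrk.trans_le rk_le_n).trans_lt Cardinal.natCast_lt_aleph0

variable (hV : IsCofiniteSubtree H V) (hV1 : 1 ∈ V)
include hV hV1

lemma exists_smul_mem_essentialEdges_stage {i : ℕ} (hi : i ≤ n) {e : CayleyEdge (Fin n)}
    (he : e ∈ essentialEdges V) (hlabel : e.label < i) :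
    ∃ h ∈ H, h • e ∈
      essentialEdges (V ∩ (stage FreeGroup.of i : Subgroup (FreeGroup (Fin n)))) := by
  induction hi using Nat.decreasingInduction with
  | self =>
    refine ⟨1, H.one_mem, ?_⟩
    rwa [one_smul, stage_of_self, Subgroup.coe_top, Set.inter_univ]
  | of_succ i hi ih =>
    obtain ⟨h, hh, hhe⟩ := ih (Nat.lt_succ_of_lt hlabel)
    have isLowerSet : IsLowerSet {j : Fin n | (j : ℕ) < i} := fun j k hkj hj =>
      lt_of_le_of_lt (Fin.le_def.1 hkj) hj
    obtain ⟨h', hh', hhe'⟩ := hV.exists_smul_mem_essentialEdges_inter_freeFactor hV1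
      (setOf_val_lt_subset_succ n i) (hH i hi) isLowerSet hhe hlabel
    exact ⟨h' * h, H.mul_mem hh' hh, (mul_smul h' h e).symm ▸ hhe'⟩

lemma exists_smul_eq_of_label_eq {e e' : CayleyEdge (Fin n)} (he : e ∈ essentialEdges V)
    (he' : e' ∈ essentialEdges V) (hlabel : e.label = e'.label) : ∃ h ∈ H, h • e = e' := by
  have label_lt : (e.label : ℕ) < e.label + 1 := Nat.lt_succ_self _
  obtain ⟨h, hh, hhe⟩ := hH.exists_smul_mem_essentialEdges_stage hV hV1 e.label.2 he label_lt
  obtain ⟨h', hh', hhe'⟩ :=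
    hH.exists_smul_mem_essentialEdges_stage hV hV1 e.label.2 he' (hlabel ▸ label_lt)
  have label_notMem : (h • e).label ∉ {j : Fin n | (j : ℕ) < e.label} := lt_irrefl (e.label : ℕ)
  have label_notMem' : (h' • e').label ∉ {j : Fin n | (j : ℕ) < e.label} := hlabel.not_gt
  obtain ⟨g, hg, hge⟩ := hV.exists_smul_eq_of_forall_smul_ne hV1
    (setOf_val_lt_subset_succ n e.label) (hH e.label e.label.2)
    hhe (fun f hf g _ => smul_ne_of_label_notMem hf label_notMem g)
    hhe' (fun f hf g _ => smul_ne_of_label_notMem hf label_notMem' g)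
  refine ⟨h'⁻¹ * g * h, H.mul_mem (H.mul_mem (H.inv_mem hh') hg) hh, ?_⟩
  rw [mul_smul, mul_smul, hge, inv_smul_smul]

end InEchelonForm

theorem InEchelonForm.isInert_of_freeGroup (hH : InEchelonForm FreeGroup.of H) : IsInert H := by
  intro G hG
  obtain ⟨V, hV, hV1⟩ := exists_isCofiniteSubtree hH.fg
  obtain ⟨W, hW, hW1⟩ := exists_isCofiniteSubtree hG
  exact rk_inf_le_of_isCofiniteSubtree hV hW ⟨1, hV1, hW1⟩ fun _ he _ he' =>
    hH.exists_smul_eq_of_label_eq hV hV1 he he'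

end Stage

/-! ### Change of basis -/

section ChangeOfBasis

open Cardinal

universe u v

variable {A : Type u} {B : Type v} [Group A] [Group B]

lemma lift_rk_map_le (f : A →* B) (K : Subgroup A) :
    lift.{u} (rk (K.map f)) ≤ lift.{v} (rk K) := by
  obtain ⟨S, hS, hrk⟩ := exists_closure_eq_mk_eq_rk K
  have closure_image : Subgroup.closure (f '' S) = K.map f := by
    rw [← MonoidHom.map_closure, hS]
  exact (lift_le.2 (rk_le_mk closure_image)).trans (hrk ▸ mk_image_le_lift)

lemma lift_rk_map_mulEquiv (f : A ≃* B) (K : Subgroup A) :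
    lift.{u} (rk (K.map (f : A →* B))) = lift.{v} (rk K) := by
  refine (lift_rk_map_le _ K).antisymm ?_
  have h := lift_rk_map_le (f.symm : B →* A) (K.map (f : A →* B))
  rwa [Subgroup.map_map, MulEquiv.coe_monoidHom_symm_comp_coe_monoidHom, Subgroup.map_id] at h

lemma lift_rk_comap_inf (f : A ≃* B) (H : Subgroup B) (K : Subgroup A) :
    lift.{v} (rk (H.comap (f : A →* B) ⊓ K)) = lift.{u} (rk (H ⊓ K.map (f : A →* B))) := by
  rw [← lift_rk_map_mulEquiv f, Subgroup.map_inf _ _ _ f.injective,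
    Subgroup.map_comap_eq_self_of_surjective f.surjective]

lemma map_stage {n : ℕ} (f : A →* B) (x : Fin n → A) (i : ℕ) :
    (stage x i).map f = stage (f ∘ x) i := by
  rw [stage, stage, MonoidHom.map_closure, Set.image_comp]

lemma InEchelonForm.comap_mulEquiv {n : ℕ} {x : Fin n → A} {H : Subgroup B} (f : A ≃* B)
    (hH : InEchelonForm (f ∘ x) H) : InEchelonForm x (H.comap (f : A →* B)) := by
  intro i hi
  have h := lift_le.{u}.2 (hH i hi)
  rw [← lift_le.{v}]
  rw [lift_add, lift_one] at h ⊢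
  rwa [lift_rk_comap_inf, lift_rk_comap_inf, map_stage, map_stage]

lemma IsInert.of_comap_mulEquiv {H : Subgroup B} (f : A ≃* B)
    (hH : IsInert (H.comap (f : A →* B))) : IsInert H := by
  intro K hK
  have map_symm : (K.map (f.symm : B →* A)).map (f : A →* B) = K := by
    rw [Subgroup.map_map, MulEquiv.coe_monoidHom_comp_coe_monoidHom_symm, Subgroup.map_id]
  have map_fg : (K.map (f.symm : B →* A)).FG := by
    rw [Subgroup.fg_iff_submonoid_fg] at hK ⊢
    exact hK.map (f.symm : B →* A)
  have h := lift_le.{v}.2 (hH _ map_fg)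
  rwa [lift_rk_comap_inf, map_symm, ← lift_rk_map_mulEquiv f, map_symm, lift_le] at h

end ChangeOfBasis

theorem echelon_isInert_general {n : ℕ} {F : Type*} [Group F] {x : Fin n → F}
    (hx : IsOrderedBasis x) {H : Subgroup F} (hH : InEchelonForm x H) : IsInert H := by
  let f : FreeGroup (Fin n) ≃* F := MulEquiv.ofBijective (FreeGroup.lift x) hx
  have hfx : f ∘ FreeGroup.of = x := funext fun _ => FreeGroup.lift_apply_of
  exact (InEchelonForm.comap_mulEquiv f (hfx ▸ hH)).isInert_of_freeGroup.of_comap_mulEquiv f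

/-- Echelon subgroups of free groups are inert. -/
theorem echelon_isInert (n : ℕ) (H : Subgroup (FreeGroup (Fin n))) (hH : IsEchelon H) :
    IsInert H := by
  obtain ⟨x, hx, hxH⟩ := hH
  exact echelon_isInert_general hx hxH
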